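/- For n ≥ 2, the bigraded Hilbert series H(s,t) := Σ_{d,e ≥ 0} dim_{F_q}( (F_q[V ⊕ V*]^{U_n})_{(d,e)} ) s^d t^e of the invariant ring of U_n, as a formal power series in ℤ[[s,t]], satisfies H(s,t) · ∏_{i=0}^{n−1} (1−s^{q^i})(1−t^{q^i}) · ∏_{i=0}^{n−2} (1−s^{q^i} t) · ∏_{i=1}^{n−2} (1−s t^{q^i}) = ∏_{k=2}^{n−1} (1 − s^{q^{k−1}} t^{q^{n−k}}) · ∏_{k=1}^{n−1} (1 − s^{q^k} t^{q^{n−k}}). -/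

import Mathlib

open MvPolynomial Matrix

variable (F : Type) [Field F] [Fintype F] (n : ℕ)

/-- The action of `σ ∈ GL_n(F)` on `F[V ⊕ V*] = F[x_1,…,x_n,y_1,…,y_n]`. -/
noncomputable def gact (σ : GL (Fin n) F) :
    MvPolynomial (Fin n ⊕ Fin n) F →ₐ[F] MvPolynomial (Fin n ⊕ Fin n) F :=
  aeval (Sum.elim
    (fun j => ∑ i : Fin n, C ((σ : Matrix (Fin n) (Fin n) F) i j) * X (Sum.inl i))
    (fun j => ∑ i : Fin n,
      C (((σ⁻¹ : GL (Fin n) F) : Matrix (Fin n) (Fin n) F) j i) * X (Sum.inr i)))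

/-- The bihomogeneous component of bidegree `(d,e)` of the invariant ring
`F[V ⊕ V*]^{U_n}`: polynomials fixed by all upper unipotent matrices that are
homogeneous of degree `d` in the `x`-variables and of degree `e` in the `y`-variables. -/
noncomputable def invBihom (d e : ℕ) : Submodule F (MvPolynomial (Fin n ⊕ Fin n) F) :=
  weightedHomogeneousSubmodule F (Sum.elim (fun _ : Fin n => 1) (fun _ : Fin n => 0)) d ⊓
  weightedHomogeneousSubmodule F (Sum.elim (fun _ : Fin n => 0) (fun _ : Fin n => 1)) e ⊓
  ⨅ (σ : GL (Fin n) F) (_ : (∀ i : Fin n, (σ : Matrix (Fin n) (Fin n) F) i i = 1) ∧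
      ∀ i j : Fin n, j < i → (σ : Matrix (Fin n) (Fin n) F) i j = 0),
    LinearMap.ker ((gact F n σ).toLinearMap -
      (LinearMap.id : MvPolynomial (Fin n ⊕ Fin n) F →ₗ[F] MvPolynomial (Fin n ⊕ Fin n) F))

/-- The bigraded Hilbert series `H(s,t) = ∑ dim (F[V ⊕ V*]^{U_n})_{(d,e)} s^d t^e`
as a formal power series in two variables `s = X 0`, `t = X 1`. -/
noncomputable def hilbertSeries : MvPowerSeries (Fin 2) ℤ :=
  fun m => (Module.finrank F (invBihom F n (m 0) (m 1)) : ℤ)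

set_option linter.unusedSectionVars false

section generic
variable {K S : Type} [Field K] [Fintype K] [CommRing S] [Algebra K S]

noncomputable def EE (K : Type) [Field K] [Fintype K] {S : Type} [CommRing S] [Algebra K S]
    (z : ℕ → S) : ℕ → (S →ₗ[K] S)
  | 0 => LinearMap.id
  | k + 1 => (FiniteField.frobeniusAlgHom K S).toLinearMap ∘ₗ EE K z k -
      LinearMap.mulLeft K ((EE K z k (z k)) ^ (Fintype.card K - 1)) ∘ₗ EE K z k

lemma EE_zero (z : ℕ → S) (T : S) : EE K z 0 T = T := rfl

lemma EE_succ (z : ℕ → S) (k : ℕ) (T : S) : EE K z (k + 1) T = (EE K z k T) ^ Fintype.card K -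
    (EE K z k (z k)) ^ (Fintype.card K - 1) * EE K z k T := by
  simp [EE]

lemma card_pos' (K : Type) [Field K] [Fintype K] : 0 < Fintype.card K := Fintype.card_pos

lemma EE_vanish (z : ℕ → S) (k i : ℕ) (h : i < k) : EE K z k (z i) = 0 := by
  induction k with
  | zero => omega
  | succ k ih =>
    rw [EE_succ]
    rcases Nat.lt_succ_iff_lt_or_eq.1 h with h | rfl
    · rw [ih h]; simp [Fintype.card_ne_zero]
    · rw [← pow_succ, Nat.sub_add_cancel (card_pos' K), sub_self]

lemma EE_coeff (z : ℕ → S) (k : ℕ) : ∃ c : ℕ → S, c k = 1 ∧ (∀ i, k < i → c i = 0) ∧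
    (∀ i, c i ∈ Algebra.adjoin K ((fun j => EE K z j (z j)) '' Set.Iio k)) ∧
    ∀ T, EE K z k T = ∑ i ∈ Finset.range (k + 1), c i * T ^ (Fintype.card K) ^ i := by
  induction k with
  | zero =>
    refine ⟨fun i => if i = 0 then 1 else 0, by simp, fun i hi => by simp; omega, fun i => ?_, ?_⟩
    · dsimp only; split_ifs
      · exact one_mem _
      · exact zero_mem _
    · intro T; simp [EE_zero]
  | succ k ih =>
    obtain ⟨c, h1, h0, hm, hT⟩ := ih
    have hmono : Algebra.adjoin K ((fun j => EE K z j (z j)) '' Set.Iio k) ≤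
        Algebra.adjoin K ((fun j => EE K z j (z j)) '' Set.Iio (k + 1)) :=
      Algebra.adjoin_mono (Set.image_mono (Set.Iio_subset_Iio (Nat.le_succ k)))
    have hf : EE K z k (z k) ∈ Algebra.adjoin K ((fun j => EE K z j (z j)) '' Set.Iio (k + 1)) :=
      Algebra.subset_adjoin ⟨k, by simp, rfl⟩
    refine ⟨fun i => (if i = 0 then 0 else c (i - 1) ^ Fintype.card K) -
      (EE K z k (z k)) ^ (Fintype.card K - 1) * c i, ?_, ?_, ?_, ?_⟩
    · simp [h1, h0]
    · intro i hi
      have : i ≠ 0 := by omega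
      simp [this, h0 i (by omega), h0 (i-1) (by omega), Fintype.card_ne_zero]
    · intro i
      dsimp only
      refine sub_mem ?_ (mul_mem (pow_mem hf _) (hmono (hm i)))
      split_ifs
      · exact zero_mem _
      · exact pow_mem (hmono (hm _)) _
    · intro T
      have e1 : (EE K z k T) ^ Fintype.card K = ∑ i ∈ Finset.range (k + 1),
          c i ^ Fintype.card K * T ^ (Fintype.card K) ^ (i + 1) := by
        rw [hT]
        have := map_sum (FiniteField.frobeniusAlgHom K S)
          (fun i => c i * T ^ (Fintype.card K) ^ i) (Finset.range (k + 1))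
        simp only [FiniteField.coe_frobeniusAlgHom] at this
        rw [this]
        refine Finset.sum_congr rfl fun i _ => ?_
        rw [mul_pow, ← pow_mul, pow_succ]
      rw [EE_succ, e1]
      simp only [sub_mul, Finset.sum_sub_distrib]
      congr 1
      · rw [Finset.sum_range_succ' _ (k + 1)]
        simp
      · rw [Finset.sum_range_succ, h0 (k+1) (by omega), hT T, Finset.mul_sum]
        simp [mul_assoc]

lemma EE_map (φ : S →ₐ[K] S) (z : ℕ → S) (k : ℕ)
    (h : ∀ i < k, φ (EE K z i (z i)) = EE K z i (z i)) (T : S) :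
    φ (EE K z k T) = EE K z k (φ T) := by
  induction k generalizing T with
  | zero => rfl
  | succ k ih =>
    have ih' := ih (fun i hi => h i (by omega))
    rw [EE_succ, EE_succ]
    simp only [map_sub, map_mul, map_pow]
    rw [ih' T, h k (by omega)]

lemma EE_inv (φ : S →ₐ[K] S) (z : ℕ → S) (n : ℕ)
    (hz : ∀ j < n, φ (z j) - z j ∈ Submodule.span K (z '' Set.Iio j)) (j : ℕ) (hj : j < n) :
    φ (EE K z j (z j)) = EE K z j (z j) := by
  induction j using Nat.strong_induction_on with
  | _ j ih =>
    rw [EE_map φ z j (fun i hi => ih i hi (by omega))]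
    rw [← sub_eq_zero, ← map_sub]
    have : Submodule.span K (z '' Set.Iio j) ≤ LinearMap.ker (EE K z j) := by
      rw [Submodule.span_le]
      rintro _ ⟨i, hi, rfl⟩
      exact EE_vanish z j i hi
    exact this (hz j hj)

lemma ded {S : Type} [CommRing S] [IsDomain S] {A G ι : Type} [Monoid A] [Fintype G] [Fintype ι]
    (φ : G → A →* S) (hφ : Function.Injective φ) (m : ι → A)
    (hc : Fintype.card ι = Fintype.card G)
    (hspan : ∀ v : G → S, (∀ i, ∑ g, v g * φ g (m i) = 0) → ∀ a, ∑ g, v g * φ g a = 0)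
    (b : ι → S) (hb : ∀ g, ∑ i, b i * φ g (m i) = 0) : b = 0 := by
  classical
  by_contra hne
  let e := Fintype.equivOfCardEq hc
  let M : Matrix ι ι S := fun j i => φ (e j) (m i)
  have h1 : M.det = 0 := by
    rw [← Matrix.exists_mulVec_eq_zero_iff]
    refine ⟨b, hne, ?_⟩
    funext j
    simp only [Matrix.mulVec, dotProduct, M, Pi.zero_apply]
    rw [← hb (e j)]
    exact Finset.sum_congr rfl fun i _ => mul_comm _ _
  rw [← Matrix.exists_vecMul_eq_zero_iff] at h1
  obtain ⟨v, hv, hv0⟩ := h1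
  have h2 : ∀ a, ∑ g, v (e.symm g) * φ g a = 0 := by
    apply hspan
    intro i
    have := congrFun hv0 i
    simp only [Matrix.vecMul, dotProduct, M, Pi.zero_apply] at this
    rw [← this, ← e.sum_comp]
    simp
  have h3 := (linearIndependent_monoidHom A S).comp φ hφ
  rw [Fintype.linearIndependent_iff] at h3
  have h4 := h3 (fun g => v (e.symm g)) (by
    funext a
    simpa using h2 a)
  apply hv
  funext j
  simpa using h4 (e j)

lemma span_bounded {J : Type} [Fintype J] (B : Subalgebra K S) (w : J → S)
    (wt N : J → ℕ)
    (h : ∀ j, w j ^ N j ∈ Submodule.span B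
      {s | ∃ a : J → ℕ, ∑ i, a i * wt i < N j * wt j ∧ s = ∏ i, w i ^ a i}) (a : J → ℕ) :
    ∏ i, w i ^ a i ∈ Submodule.span B
      (Set.range fun c : (∀ j, Fin (N j)) => ∏ j, w j ^ (c j : ℕ)) := by
  classical
  induction hd : ∑ i, a i * wt i using Nat.strong_induction_on generalizing a with
  | _ d ih =>
  by_cases hb : ∀ j, a j < N j
  · exact Submodule.subset_span ⟨fun j => ⟨a j, hb j⟩, rfl⟩
  · push Not at hb
    obtain ⟨j, hj⟩ := hb
    let a' : J → ℕ := fun i => a i - if i = j then N j else 0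
    have ha : ∀ i, a i = a' i + if i = j then N j else 0 := by
      intro i; simp only [a']; split_ifs with h
      · subst h; omega
      · omega
    have e1 : ∏ i, w i ^ a i = (∏ i, w i ^ a' i) * w j ^ N j := by
      simp_rw [fun i => ha i, pow_add, Finset.prod_mul_distrib]
      congr 1
      simp [pow_ite, Finset.prod_ite_eq']
    have e2 : ∑ i, a i * wt i = (∑ i, a' i * wt i) + N j * wt j := by
      simp_rw [fun i => ha i, add_mul, Finset.sum_add_distrib]
      congr 1
      simp [ite_mul]
    rw [e1]
    have key : Submodule.span B
      {s | ∃ a : J → ℕ, ∑ i, a i * wt i < N j * wt j ∧ s = ∏ i, w i ^ a i} ≤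
      (Submodule.span B (Set.range fun c : (∀ j, Fin (N j)) => ∏ j, w j ^ (c j : ℕ))).comap
        (LinearMap.mulLeft B (∏ i, w i ^ a' i)) := by
      rw [Submodule.span_le]
      rintro _ ⟨b, hb, rfl⟩
      simp only [Submodule.comap_coe, Set.mem_preimage, LinearMap.mulLeft_apply, SetLike.mem_coe]
      rw [← Finset.prod_mul_distrib]
      simp_rw [← pow_add]
      refine ih _ ?_ (fun i => a' i + b i) rfl
      simp_rw [add_mul, Finset.sum_add_distrib]
      omega
    exact key (h j)

lemma adjoin_bounded {J : Type} [Fintype J] [DecidableEq J] (B : Subalgebra K S) (w : J → S)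
    (wt N : J → ℕ)
    (h : ∀ j, w j ^ N j ∈ Submodule.span B
      {s | ∃ a : J → ℕ, ∑ i, a i * wt i < N j * wt j ∧ s = ∏ i, w i ^ a i}) (s : S)
    (hs : s ∈ Algebra.adjoin B (Set.range w)) :
    ∃ p : (∀ j, Fin (N j)) → B, s = ∑ c, (p c : S) * ∏ j, w j ^ (c j : ℕ) := by
  have h1 : s ∈ Submodule.span B
      (Set.range fun c : (∀ j, Fin (N j)) => ∏ j, w j ^ (c j : ℕ)) := by
    rw [← Subalgebra.mem_toSubmodule, Algebra.adjoin_eq_span] at hs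
    refine Submodule.span_le.2 ?_ hs
    intro t ht
    have : ∃ a : J → ℕ, t = ∏ i, w i ^ a i := by
      induction ht using Submonoid.closure_induction with
      | mem x hx =>
        obtain ⟨j, rfl⟩ := hx
        exact ⟨Pi.single j 1, by simp [Pi.single_apply, pow_ite, Finset.prod_ite_eq']⟩
      | one => exact ⟨0, by simp⟩
      | mul x y _ _ hx hy =>
        obtain ⟨a, rfl⟩ := hx
        obtain ⟨b, rfl⟩ := hy
        exact ⟨a + b, by simp [pow_add, Finset.prod_mul_distrib]⟩
    obtain ⟨a, rfl⟩ := this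
    exact span_bounded B w wt N h a
  rw [Submodule.mem_span_range_iff_exists_fun] at h1
  obtain ⟨p, hp⟩ := h1
  exact ⟨p, hp.symm⟩

end generic

section generic
variable {K S : Type} [Field K] [Fintype K] [CommRing S] [Algebra K S]

lemma loc_yinL (n : ℕ) (x y : ℕ → S)
    (C : Subalgebra K S) (hfC : ∀ k < n, EE K x k (x k) ∈ C)
    (huC : ∀ k < n, ∑ i ∈ Finset.range n, x i ^ (Fintype.card K) ^ k * y i ∈ C)
    (L : Subalgebra K S) (hCL : C ≤ L) (hxL : ∀ i < n, x i ∈ L)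
    (hdiv : ∀ s, ∀ k < n, EE K x k (x k) * s ∈ L → s ∈ L) (j : ℕ) :
    ∀ k < n, n - 1 - k ≤ j → y k ∈ L := by
  have hEL : ∀ k < n, ∀ i < n, EE K x k (x i) ∈ L := by
    intro k hk i hi
    obtain ⟨c, -, -, hc, hT⟩ := EE_coeff (K := K) x k
    rw [hT]
    refine sum_mem fun m _ => mul_mem ?_ (pow_mem (hxL i hi) _)
    refine hCL (Algebra.adjoin_le ?_ (hc m))
    rintro _ ⟨l, hl, rfl⟩
    exact hfC l (lt_trans hl hk)
  induction j using Nat.strong_induction_on with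
  | _ j ih =>
    intro k hk hkj
    apply hdiv _ k hk
    have hv : ∑ i ∈ Finset.range n, EE K x k (x i) * y i ∈ C := by
      obtain ⟨c, -, -, hc, hT⟩ := EE_coeff (K := K) x k
      have : ∑ i ∈ Finset.range n, EE K x k (x i) * y i =
          ∑ m ∈ Finset.range (k + 1), c m *
            ∑ i ∈ Finset.range n, x i ^ (Fintype.card K) ^ m * y i := by
        simp_rw [hT, Finset.sum_mul, Finset.mul_sum]
        rw [Finset.sum_comm]
        simp_rw [mul_assoc]
      rw [this]
      refine sum_mem fun m hm => mul_mem ?_ (huC m (by simp at hm; omega))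
      refine Algebra.adjoin_le ?_ (hc m)
      rintro _ ⟨l, hl, rfl⟩
      exact hfC l (lt_trans hl hk)
    rw [← Finset.add_sum_erase _ _ (Finset.mem_range.2 hk)] at hv
    have hrest : ∑ i ∈ (Finset.range n).erase k, EE K x k (x i) * y i ∈ L := by
      refine sum_mem fun i hi => ?_
      simp only [Finset.mem_erase, Finset.mem_range] at hi
      rcases lt_or_ge i k with h | h
      · rw [EE_vanish x k i h, zero_mul]; exact zero_mem _
      · exact mul_mem (hEL k hk i hi.2) (ih (n - 1 - i) (by omega) i hi.2 le_rfl)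
    have := sub_mem (hCL hv) hrest
    simpa using this

lemma loc [IsDomain S] (n : ℕ) (x y : ℕ → S)
    (hgen : Algebra.adjoin K (x '' Set.Iio n ∪ y '' Set.Iio n) = ⊤)
    {G : Type} [Fintype G] (φ : G → S →ₐ[K] S)
    (hx : ∀ g, ∀ j < n, φ g (x j) - x j ∈ Submodule.span K (x '' Set.Iio j))
    (hinj : ∀ g g', (∀ i < n, φ g (x i) = φ g' (x i)) → g = g')
    (hcard : Fintype.card G = ∏ i ∈ Finset.range n, (Fintype.card K) ^ i)
    (hu : ∀ g, ∀ k < n, φ g (∑ i ∈ Finset.range n, x i ^ (Fintype.card K) ^ k * y i) =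
      ∑ i ∈ Finset.range n, x i ^ (Fintype.card K) ^ k * y i)
    (r : S) (hr : ∀ g, φ g r = r) :
    ∃ a : ℕ, (∏ k ∈ Finset.range n, EE K x k (x k)) ^ a * r ∈
      Algebra.adjoin K ((fun k => EE K x k (x k)) '' Set.Iio n ∪
        (fun k => ∑ i ∈ Finset.range n, x i ^ (Fintype.card K) ^ k * y i) '' Set.Iio n) := by
  classical
  set C := Algebra.adjoin K ((fun k => EE K x k (x k)) '' Set.Iio n ∪
        (fun k => ∑ i ∈ Finset.range n, x i ^ (Fintype.card K) ^ k * y i) '' Set.Iio n) with hC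
  set D := ∏ k ∈ Finset.range n, EE K x k (x k) with hD
  have hfC : ∀ k < n, EE K x k (x k) ∈ C := fun k hk =>
    Algebra.subset_adjoin (Or.inl ⟨k, hk, rfl⟩)
  have huC : ∀ k < n, ∑ i ∈ Finset.range n, x i ^ (Fintype.card K) ^ k * y i ∈ C := fun k hk =>
    Algebra.subset_adjoin (Or.inr ⟨k, hk, rfl⟩)
  have hDC : D ∈ C := prod_mem fun k hk => hfC k (Finset.mem_range.1 hk)
  let w : Fin n → S := fun i => x i
  let CX : Subalgebra C S := Algebra.adjoin C (Set.range w)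
  have hCCX : ∀ s ∈ C, s ∈ CX := fun s hs => CX.algebraMap_mem ⟨s, hs⟩
  have hDCX : D ∈ CX := hCCX D hDC
  let L : Subalgebra K S :=
    { carrier := {s | ∃ a : ℕ, D ^ a * s ∈ CX}
      mul_mem' := by
        rintro s t ⟨a, ha⟩ ⟨b, hb⟩
        exact ⟨a + b, by have := mul_mem ha hb; convert this using 1; ring⟩
      add_mem' := by
        rintro s t ⟨a, ha⟩ ⟨b, hb⟩
        refine ⟨a + b, ?_⟩
        have := add_mem (mul_mem (pow_mem hDCX b) ha) (mul_mem (pow_mem hDCX a) hb)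
        convert this using 1; ring
      algebraMap_mem' := fun c => ⟨0, by
        simpa using hCCX _ (C.algebraMap_mem c)⟩ }
  have hCXL : ∀ s ∈ CX, s ∈ L := fun s hs => ⟨0, by simpa using hs⟩
  have hdiv : ∀ s, ∀ k < n, EE K x k (x k) * s ∈ L → s ∈ L := by
    rintro s k hk ⟨a, ha⟩
    refine ⟨a + 1, ?_⟩
    have h1 : D = EE K x k (x k) * ∏ i ∈ (Finset.range n).erase k, EE K x i (x i) :=
      (Finset.mul_prod_erase _ _ (Finset.mem_range.2 hk)).symm
    have h2 : ∏ i ∈ (Finset.range n).erase k, EE K x i (x i) ∈ CX :=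
      hCCX _ (prod_mem fun i hi => hfC i (by simp at hi; exact hi.2))
    have h3 := mul_mem h2 ha
    have : D ^ (a + 1) * s = (∏ i ∈ (Finset.range n).erase k, EE K x i (x i)) *
        (D ^ a * (EE K x k (x k) * s)) := by
      rw [pow_succ]; nth_rewrite 2 [h1]; ring
    rw [this]; exact h3
  have hxCX : ∀ i < n, x i ∈ CX := fun i hi =>
    Algebra.subset_adjoin ⟨⟨i, hi⟩, rfl⟩
  have hyL := loc_yinL n x y C hfC huC L (fun s hs => hCXL s (hCCX s hs))
    (fun i hi => hCXL _ (hxCX i hi)) hdiv n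
  have hL : r ∈ L := by
    have : Algebra.adjoin K (x '' Set.Iio n ∪ y '' Set.Iio n) ≤ L := by
      rw [Algebra.adjoin_le_iff]
      rintro _ (⟨i, hi, rfl⟩ | ⟨i, hi, rfl⟩)
      · exact hCXL _ (hxCX i hi)
      · exact hyL i hi (by omega)
    rw [hgen] at this
    exact this trivial
  obtain ⟨a, ha⟩ := hL
  refine ⟨a, ?_⟩
  have hrel : ∀ j : Fin n, w j ^ ((Fintype.card K) ^ (j : ℕ)) ∈ Submodule.span C
      {s | ∃ a : Fin n → ℕ, ∑ i, a i * 1 < (Fintype.card K) ^ (j : ℕ) * 1 ∧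
        s = ∏ i, w i ^ a i} := by
    intro j
    obtain ⟨c, h1, -, hc, hT⟩ := EE_coeff (K := K) x j
    have hcC : ∀ i, c i ∈ C := by
      intro i
      refine Algebra.adjoin_le ?_ (hc i)
      rintro _ ⟨l, hl, rfl⟩
      exact hfC l (lt_trans hl j.2)
    have h2 := hT (x j)
    rw [Finset.sum_range_succ, h1, one_mul] at h2
    have h3 : w j ^ ((Fintype.card K) ^ (j : ℕ)) = EE K x j (x j) -
        ∑ i ∈ Finset.range j, c i * x j ^ (Fintype.card K) ^ i := by
      rw [h2]; simp [w]
    rw [h3]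
    have hq : 1 < Fintype.card K := Fintype.one_lt_card
    have hmon : ∀ s ∈ C, ∀ e < (Fintype.card K) ^ (j : ℕ), s * x j ^ e ∈ Submodule.span C
      {s | ∃ a : Fin n → ℕ, ∑ i, a i * 1 < (Fintype.card K) ^ (j : ℕ) * 1 ∧
        s = ∏ i, w i ^ a i} := by
      intro s hs e he
      refine Submodule.smul_mem _ (⟨s, hs⟩ : C) (Submodule.subset_span ⟨Pi.single j e, ?_, ?_⟩)
      · simpa using he
      · simp [Pi.single_apply, pow_ite, Finset.prod_ite_eq', w]
    refine sub_mem ?_ (sum_mem fun i hi => hmon _ (hcC i) _ ?_)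
    · simpa using hmon _ (hfC j j.2) 0 (by positivity)
    · exact Nat.pow_lt_pow_right hq (by simpa using hi)
  obtain ⟨p, hp⟩ := adjoin_bounded C w (fun _ => 1) (fun j : Fin n => (Fintype.card K) ^ (j : ℕ))
    hrel (D ^ a * r) ha
  have hfix : ∀ g, ∀ s ∈ C, φ g s = s := by
    intro g s hs
    have : C ≤ AlgHom.equalizer (φ g) (AlgHom.id K S) := by
      rw [hC, Algebra.adjoin_le_iff]
      rintro _ (⟨k, hk, rfl⟩ | ⟨k, hk, rfl⟩)
      · exact EE_inv (φ g) x n (hx g) k hk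
      · exact hu g k hk
    exact this hs
  have hpos : ∀ j : Fin n, 0 < (Fintype.card K) ^ (j : ℕ) := fun j => by
    have := card_pos' K; positivity
  let XA : Subalgebra K S := Algebra.adjoin K (Set.range w)
  let m : (∀ j : Fin n, Fin ((Fintype.card K) ^ (j : ℕ))) → XA := fun c =>
    ⟨∏ j, w j ^ (c j : ℕ), prod_mem fun j _ => pow_mem (Algebra.subset_adjoin (Set.mem_range_self j)) _⟩
  let ψ : G → XA →* S := fun g => ((φ g).comp XA.val : XA →* S)
  have hψ : Function.Injective ψ := by
    intro g g' h
    apply hinj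
    intro i hi
    have hxi : x i ∈ XA := Algebra.subset_adjoin ⟨⟨i, hi⟩, rfl⟩
    exact DFunLike.congr_fun h ⟨x i, hxi⟩
  let c0 : (∀ j : Fin n, Fin ((Fintype.card K) ^ (j : ℕ))) := fun j => ⟨0, hpos j⟩
  have hm0 : (m c0 : S) = 1 := by simp [m, c0]
  have hded := ded ψ hψ m (by
      rw [hcard, Fintype.card_pi, ← Fin.prod_univ_eq_prod_range]; simp)
    (by
      intro v hv s
      obtain ⟨p, hp⟩ := adjoin_bounded C w (fun _ => 1)
        (fun j : Fin n => (Fintype.card K) ^ (j : ℕ)) hrel (s : S) (by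
          have : XA ≤ CX.restrictScalars K := by
            rw [Algebra.adjoin_le_iff]
            rintro _ ⟨i, rfl⟩
            exact hxCX i i.2
          exact this s.2)
      have e : ∀ g, ψ g s = ∑ c, (p c : S) * ψ g (m c) := by
        intro g
        change φ g (s : S) = ∑ c, (p c : S) * φ g (m c : S)
        rw [hp, map_sum]
        simp_rw [map_mul, fun c => hfix g (p c : S) (p c).2]
        rfl
      simp_rw [e, Finset.mul_sum]
      rw [Finset.sum_comm]
      refine Finset.sum_eq_zero fun c _ => ?_
      have := congrArg (fun t => (p c : S) * t) (hv c)
      simp only [mul_zero, Finset.mul_sum] at this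
      rw [← this]
      refine Finset.sum_congr rfl fun g _ => by ring)
    (fun c => (p c : S) - if c = c0 then D ^ a * r else 0)
    (by
      intro g
      have e : φ g (D ^ a * r) = D ^ a * r := by
        rw [map_mul, hr g, hfix g _ (pow_mem hDC a)]
      simp_rw [sub_mul, Finset.sum_sub_distrib]
      rw [sub_eq_zero]
      simp only [ite_mul, zero_mul, Finset.sum_ite_eq', Finset.mem_univ, if_true]
      have e2 : ψ g (m c0) = 1 := by
        change φ g (m c0 : S) = 1
        rw [hm0, map_one]
      rw [e2, mul_one, ← e, hp, map_sum]
      simp_rw [map_mul, fun c => hfix g (p c : S) (p c).2]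
      rfl)
  have := congrFun hded c0
  simp only [if_true, Pi.zero_apply, sub_eq_zero] at this
  rw [← this]
  exact (p c0).2

end generic

section generic
variable {K S : Type} [Field K] [Fintype K] [CommRing S] [Algebra K S]

def UU (q n : ℕ) (x y : ℕ → S) (a b : ℕ) : S :=
  ∑ i ∈ Finset.range n, x i ^ q ^ a * y i ^ q ^ b

abbrev JJ (n : ℕ) : Type := ↥(Finset.Icc (-((n : ℤ) - 2)) ((n : ℤ) - 2))

def ww (q n : ℕ) (x y : ℕ → S) (j : JJ n) : S := UU q n x y (j : ℤ).toNat (-(j : ℤ)).toNat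

def wwt (q n : ℕ) (j : JJ n) : ℕ := q ^ (j : ℤ).toNat + q ^ (-(j : ℤ)).toNat

def NN (q n : ℕ) (j : JJ n) : ℕ := q ^ ((n - (j : ℤ).natAbs) / 2)

lemma UU_pow (n : ℕ) (x y : ℕ → S) (a b c : ℕ) :
    UU (Fintype.card K) n x y a b ^ (Fintype.card K) ^ c =
      UU (Fintype.card K) n x y (a + c) (b + c) := by
  induction c with
  | zero => simp
  | succ c ih =>
    rw [pow_succ, pow_mul, ih, UU, UU]
    have := map_sum (FiniteField.frobeniusAlgHom K S)
      (fun i => x i ^ (Fintype.card K) ^ (a + c) * y i ^ (Fintype.card K) ^ (b + c))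
      (Finset.range n)
    simp only [FiniteField.coe_frobeniusAlgHom] at this
    rw [this]
    refine Finset.sum_congr rfl fun i _ => ?_
    rw [mul_pow, ← pow_mul, ← pow_mul, ← pow_succ, ← pow_succ]; rfl

lemma UU_eq_ww (n : ℕ) (x y : ℕ → S) (a b : ℕ) (j : JJ n) (h : (j : ℤ) = (a : ℤ) - b) :
    UU (Fintype.card K) n x y a b = ww (Fintype.card K) n x y j ^ (Fintype.card K) ^ (min a b) := by
  rw [ww, UU_pow]
  congr 1 <;> omega

lemma rel_mem (n : ℕ) (x y : ℕ → S) (B : Subalgebra K S)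
    (hf : ∀ k < n, EE K x k (x k) ∈ B)
    (hg : ∀ k < n, EE K (fun i => y (n - 1 - i)) k (y (n - 1 - k)) ∈ B)
    (k l : ℕ) (hk : k ≤ n) (hl : l ≤ n) (hkl : n ≤ k + l + 1) :
    ∃ c d : ℕ → S, c k = 1 ∧ d l = 1 ∧ (∀ i, c i ∈ B) ∧ (∀ i, d i ∈ B) ∧
      ∑ i ∈ Finset.range (k + 1), ∑ i' ∈ Finset.range (l + 1),
        c i * d i' * UU (Fintype.card K) n x y i i' ∈ B := by
  obtain ⟨c, hc1, -, hc, hcT⟩ := EE_coeff (K := K) x k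
  obtain ⟨d, hd1, -, hd, hdT⟩ := EE_coeff (K := K) (fun i => y (n - 1 - i)) l
  refine ⟨c, d, hc1, hd1, fun i => ?_, fun i => ?_, ?_⟩
  · refine Algebra.adjoin_le ?_ (hc i)
    rintro _ ⟨l, hl, rfl⟩
    exact hf l (lt_of_lt_of_le hl hk)
  · refine Algebra.adjoin_le ?_ (hd i)
    rintro _ ⟨l, hl', rfl⟩
    exact hg l (lt_of_lt_of_le hl' hl)
  · have : ∑ i ∈ Finset.range (k + 1), ∑ i' ∈ Finset.range (l + 1),
        c i * d i' * UU (Fintype.card K) n x y i i' =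
        ∑ m ∈ Finset.range n, EE K x k (x m) * EE K (fun i => y (n - 1 - i)) l (y m) := by
      simp_rw [hcT, hdT, Finset.sum_mul_sum, UU, Finset.mul_sum]
      rw [Finset.sum_comm (s := Finset.range n)]
      refine Finset.sum_congr rfl fun i _ => ?_
      rw [Finset.sum_comm (s := Finset.range n)]
      refine Finset.sum_congr rfl fun i _ => Finset.sum_congr rfl fun i _ => by ring
    rw [this]
    refine sum_mem fun m hm => ?_
    simp only [Finset.mem_range] at hm
    rcases lt_or_ge m k with h | h
    · rw [EE_vanish x k m h, zero_mul]; exact zero_mem _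
    rcases lt_or_ge (n - 1 - m) l with h' | h'
    · have := EE_vanish (K := K) (fun i => y (n - 1 - i)) l (n - 1 - m) h'
      simp only [show n - 1 - (n - 1 - m) = m by omega] at this
      rw [this, mul_zero]; exact zero_mem _
    · have e1 : m = k := by omega
      subst e1
      have := hg l (by omega)
      simp only [show n - 1 - l = m by omega] at this
      exact mul_mem (hf m hm) this

def Wlt (q n : ℕ) (x y : ℕ → S) (B : Subalgebra K S) (d : ℕ) : Submodule B S :=
  Submodule.span B {s | ∃ a : JJ n → ℕ, ∑ i, a i * wwt q n i < d ∧ s = ∏ i, ww q n x y i ^ a i}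

lemma Wlt_mono (q n : ℕ) (x y : ℕ → S) (B : Subalgebra K S) {d e : ℕ} (h : d ≤ e) :
    Wlt q n x y B d ≤ Wlt q n x y B e := by
  refine Submodule.span_mono ?_
  rintro s ⟨a, ha, rfl⟩
  exact ⟨a, lt_of_lt_of_le ha h, rfl⟩

lemma Wlt_const (q n : ℕ) (x y : ℕ → S) (B : Subalgebra K S) {d : ℕ} (hd : 0 < d) (s : S)
    (hs : s ∈ B) : s ∈ Wlt q n x y B d := by
  have h1 : (1 : S) ∈ Wlt q n x y B d := Submodule.subset_span ⟨0, by simpa using hd, by simp⟩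
  simpa using Submodule.smul_mem _ (⟨s, hs⟩ : B) h1 |> fun h => (show s * 1 ∈ _ from h)

lemma wwt_pow (q n a b : ℕ) (j : JJ n) (h : (j : ℤ) = (a : ℤ) - b) :
    q ^ (min a b) * wwt q n j = q ^ a + q ^ b := by
  rw [wwt, mul_add, ← pow_add, ← pow_add]
  congr 2 <;> omega

lemma UU_mem1 (n : ℕ) (x y : ℕ → S) (B : Subalgebra K S) (a b : ℕ)
    (h1 : a ≤ b + (n - 2)) (h2 : b ≤ a + (n - 2)) (hn : 2 ≤ n) :
    UU (Fintype.card K) n x y a b ∈ Wlt (Fintype.card K) n x y B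
      ((Fintype.card K) ^ a + (Fintype.card K) ^ b + 1) := by
  classical
  let j : JJ n := ⟨(a : ℤ) - b, by simp; omega⟩
  rw [UU_eq_ww n x y a b j rfl]
  refine Submodule.subset_span ⟨Pi.single j ((Fintype.card K) ^ (min a b)), ?_, ?_⟩
  · rw [Nat.lt_succ_iff, ← wwt_pow _ n a b j rfl]
    simp [Pi.single_apply]
  · simp [Pi.single_apply, pow_ite, Finset.prod_ite_eq']

lemma UU_mem (n : ℕ) (x y : ℕ → S) (B : Subalgebra K S)
    (hf : ∀ k < n, EE K x k (x k) ∈ B)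
    (hg : ∀ k < n, EE K (fun i => y (n - 1 - i)) k (y (n - 1 - k)) ∈ B) (a b : ℕ)
    (h1 : a < n) (h2 : b < n) (hn : 2 ≤ n) :
    UU (Fintype.card K) n x y a b ∈ Wlt (Fintype.card K) n x y B
      ((Fintype.card K) ^ a + (Fintype.card K) ^ b + 1) := by
  have hq := card_pos' K
  by_cases hab : a ≤ b + (n - 2) ∧ b ≤ a + (n - 2)
  · exact UU_mem1 n x y B a b hab.1 hab.2 hn
  have h3 : a = n - 1 ∧ b = 0 ∨ a = 0 ∧ b = n - 1 := by omega
  obtain ⟨c, d, hc1, hd1, hc, hd, hrel⟩ := rel_mem n x y B hf hg a b h1.le h2.le (by omega)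
  rcases h3 with ⟨rfl, rfl⟩ | ⟨rfl, rfl⟩
  · simp only [zero_add, Finset.sum_range_one, hd1, mul_one] at hrel
    rw [Finset.sum_range_succ, hc1, one_mul] at hrel
    have h4 := Wlt_const (Fintype.card K) n x y B
      (Nat.succ_pos ((Fintype.card K) ^ (n - 1) + (Fintype.card K) ^ 0)) _ hrel
    refine (Submodule.add_mem_iff_right _ (sum_mem fun i hi => ?_)).1 h4
    simp only [Finset.mem_range] at hi
    refine Submodule.smul_mem _ (⟨c i, hc i⟩ : B) (Wlt_mono _ _ _ _ _ ?_
      (UU_mem1 n x y B i 0 (by omega) (by omega) hn))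
    have := Nat.pow_le_pow_right hq hi.le
    omega
  · simp only [zero_add, Finset.sum_range_one, hc1, one_mul] at hrel
    rw [Finset.sum_range_succ, hd1, one_mul] at hrel
    have h4 := Wlt_const (Fintype.card K) n x y B
      (Nat.succ_pos ((Fintype.card K) ^ 0 + (Fintype.card K) ^ (n - 1))) _ hrel
    refine (Submodule.add_mem_iff_right _ (sum_mem fun i hi => ?_)).1 h4
    simp only [Finset.mem_range] at hi
    refine Submodule.smul_mem _ (⟨d i, hd i⟩ : B) (Wlt_mono _ _ _ _ _ ?_
      (UU_mem1 n x y B 0 i (by omega) (by omega) hn))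
    have := Nat.pow_le_pow_right hq hi.le
    omega

lemma JJ_pair (n : ℕ) (hn : 2 ≤ n) (j : JJ n) : ∃ k l : ℕ, (j : ℤ) = (k : ℤ) - l ∧ 1 ≤ k ∧ 1 ≤ l ∧
    k + l ≤ n ∧ n ≤ k + l + 1 ∧ (n - (j : ℤ).natAbs) / 2 = min k l := by
  obtain ⟨j, hj⟩ := j
  simp only [Finset.mem_Icc] at hj
  refine ⟨(((n : ℤ) - j) / 2 + j).toNat, (((n : ℤ) - j) / 2).toNat, ?_, ?_, ?_, ?_, ?_, ?_⟩ <;>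
    (try simp only) <;> omega

lemma ww_rel (n : ℕ) (x y : ℕ → S) (B : Subalgebra K S)
    (hf : ∀ k < n, EE K x k (x k) ∈ B)
    (hg : ∀ k < n, EE K (fun i => y (n - 1 - i)) k (y (n - 1 - k)) ∈ B)
    (hn : 2 ≤ n) (j : JJ n) :
    ww (Fintype.card K) n x y j ^ NN (Fintype.card K) n j ∈ Wlt (Fintype.card K) n x y B
      (NN (Fintype.card K) n j * wwt (Fintype.card K) n j) := by
  obtain ⟨k, l, hj, hk, hl, hkl, hkl', hmin⟩ := JJ_pair n hn j
  have hq : 1 < Fintype.card K := Fintype.one_lt_card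
  rw [NN, hmin, ← UU_eq_ww n x y k l j hj, wwt_pow _ n k l j hj]
  obtain ⟨c, d, hc1, hd1, hc, hd, hrel⟩ := rel_mem n x y B hf hg k l (by omega) (by omega) hkl'
  rw [Finset.sum_range_succ, Finset.sum_range_succ _ l, hc1, hd1] at hrel
  simp only [one_mul] at hrel
  have hpos : 0 < (Fintype.card K) ^ k + (Fintype.card K) ^ l := by positivity
  have h4 := Wlt_const (Fintype.card K) n x y B hpos _ hrel
  refine (Submodule.add_mem_iff_right _ ?_).1 ((Submodule.add_mem_iff_right _ ?_).1 h4)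
  · refine sum_mem fun i hi => ?_
    simp only [Finset.mem_range] at hi
    refine Submodule.smul_mem _ (⟨d i, hd i⟩ : B) (Wlt_mono _ _ _ _ _ ?_
      (UU_mem n x y B hf hg k i (by omega) (by omega) hn))
    have := Nat.pow_lt_pow_right hq hi
    omega
  · refine sum_mem fun i hi => sum_mem fun i' hi' => ?_
    simp only [Finset.mem_range] at hi hi'
    refine Submodule.smul_mem _ (⟨c i * d i', mul_mem (hc i) (hd i')⟩ : B) (Wlt_mono _ _ _ _ _ ?_
      (UU_mem n x y B hf hg i i' (by omega) (by omega) hn))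
    have := Nat.pow_lt_pow_right hq hi
    have := Nat.pow_le_pow_right (card_pos' K) (Nat.lt_succ_iff.1 hi')
    omega

lemma UU_mem_adjoin (n : ℕ) (x y : ℕ → S) (B : Subalgebra K S)
    (hf : ∀ k < n, EE K x k (x k) ∈ B)
    (hg : ∀ k < n, EE K (fun i => y (n - 1 - i)) k (y (n - 1 - k)) ∈ B) (a b : ℕ)
    (h1 : a < n) (h2 : b < n) (hn : 2 ≤ n) :
    UU (Fintype.card K) n x y a b ∈ Algebra.adjoin B (Set.range (ww (Fintype.card K) n x y)) := by
  have h := UU_mem n x y B hf hg a b h1 h2 hn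
  refine (Submodule.span_le (p := Subalgebra.toSubmodule
    (Algebra.adjoin B (Set.range (ww (Fintype.card K) n x y))))).2 ?_ h
  rintro _ ⟨a, -, rfl⟩
  exact Subalgebra.prod_mem _ fun i _ => Subalgebra.pow_mem _ (Algebra.subset_adjoin (Set.mem_range_self i)) _

lemma sum_half (n : ℕ) : ∑ i ∈ Finset.range n, (i + 1) / 2 + ∑ i ∈ Finset.range n, i / 2 =
    ∑ i ∈ Finset.range n, i := by
  rw [← Finset.sum_add_distrib]
  exact Finset.sum_congr rfl fun i _ => by omega

end generic

section concrete
variable (F : Type) [Field F] [Fintype F] (n : ℕ)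

abbrev SS : Type := MvPolynomial (Fin n ⊕ Fin n) F

noncomputable def xx (i : ℕ) : SS F n := if h : i < n then X (Sum.inl ⟨i, h⟩) else 0
noncomputable def yy (i : ℕ) : SS F n := if h : i < n then X (Sum.inr ⟨i, h⟩) else 0

def IsU (σ : GL (Fin n) F) : Prop :=
  (∀ i : Fin n, (σ : Matrix (Fin n) (Fin n) F) i i = 1) ∧
      ∀ i j : Fin n, j < i → (σ : Matrix (Fin n) (Fin n) F) i j = 0

variable {F n}

lemma xx_fin (i : Fin n) : xx F n i = X (Sum.inl i) := by simp [xx]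
lemma yy_fin (i : Fin n) : yy F n i = X (Sum.inr i) := by simp [yy]

lemma mul_inv_apply' (σ : GL (Fin n) F) (i k : Fin n) :
    ∑ j, (σ : Matrix (Fin n) (Fin n) F) i j * ((σ⁻¹ : GL (Fin n) F) : Matrix (Fin n) (Fin n) F) j k
      = if i = k then 1 else 0 := by
  have : (σ : Matrix (Fin n) (Fin n) F) * ((σ⁻¹ : GL (Fin n) F) : Matrix (Fin n) (Fin n) F) = 1 :=
    Units.mul_inv σ
  have := congrFun (congrFun this i) k
  rwa [Matrix.mul_apply, Matrix.one_apply] at this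

lemma IsU.inv {σ : GL (Fin n) F} (h : IsU F n σ) : IsU F n σ⁻¹ := by
  have key : ∀ d : ℕ, ∀ i k : Fin n, k ≤ i → n - 1 - i ≤ d →
      ((σ⁻¹ : GL (Fin n) F) : Matrix (Fin n) (Fin n) F) i k = if i = k then 1 else 0 := by
    intro d
    induction d using Nat.strong_induction_on with
    | _ d ih =>
      intro i k hki hid
      have h1 := mul_inv_apply' σ i k
      rw [Finset.sum_eq_single i, h.1 i, one_mul] at h1
      · exact h1
      · intro j _ hji
        rcases lt_or_gt_of_ne hji with hlt | hgt
        · rw [h.2 i j hlt, zero_mul]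
        · rw [ih (n - 1 - j) (by have := j.2; have : (i:ℕ) < j := hgt; omega) j k
            (hki.trans hgt.le) le_rfl,
            if_neg (fun e => by subst e; exact absurd hki (not_le.2 hgt)), mul_zero]
      · simp
  refine ⟨fun i => ?_, fun i j hji => ?_⟩
  · rw [key n i i le_rfl (by omega), if_pos rfl]
  · rw [key n i j hji.le (by omega), if_neg (ne_of_gt hji)]

lemma gact_inl (σ : GL (Fin n) F) (j : Fin n) : gact F n σ (X (Sum.inl j)) =
    ∑ i : Fin n, (σ : Matrix (Fin n) (Fin n) F) i j • X (Sum.inl i) := by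
  simp [gact, MvPolynomial.smul_eq_C_mul]

lemma gact_inr (σ : GL (Fin n) F) (j : Fin n) : gact F n σ (X (Sum.inr j)) =
    ∑ i : Fin n, ((σ⁻¹ : GL (Fin n) F) : Matrix (Fin n) (Fin n) F) j i • X (Sum.inr i) := by
  simp [gact, MvPolynomial.smul_eq_C_mul]

noncomputable def yact (σ : GL (Fin n) F) : SS F n →ₐ[F] SS F n :=
  aeval (Sum.elim (fun j => X (Sum.inl j)) (fun j => ∑ i : Fin n,
      ((σ⁻¹ : GL (Fin n) F) : Matrix (Fin n) (Fin n) F) j i • X (Sum.inr i)))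

lemma yact_inl (σ : GL (Fin n) F) (j : Fin n) :
    yact σ (X (Sum.inl j)) = X (Sum.inl j) := by
  simp [yact]

lemma yact_inr (σ : GL (Fin n) F) (j : Fin n) : yact σ (X (Sum.inr j)) =
    ∑ i : Fin n, ((σ⁻¹ : GL (Fin n) F) : Matrix (Fin n) (Fin n) F) j i • X (Sum.inr i) := by
  simp [yact]

lemma tri_xx (φ : SS F n →ₐ[F] SS F n) (σ : GL (Fin n) F) (h : IsU F n σ)
    (hφ : ∀ j : Fin n, φ (X (Sum.inl j)) =
      ∑ i : Fin n, (σ : Matrix (Fin n) (Fin n) F) i j • X (Sum.inl i)) (j : ℕ) (hj : j < n) :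
    φ (xx F n j) - xx F n j ∈ Submodule.span F (xx F n '' Set.Iio j) := by
  have := xx_fin (F := F) (⟨j, hj⟩ : Fin n)
  simp only at this
  rw [this, hφ, ← Finset.add_sum_erase _ _ (Finset.mem_univ (⟨j, hj⟩ : Fin n)), h.1, one_smul,
    add_sub_cancel_left]
  refine sum_mem fun i hi => ?_
  rcases lt_or_gt_of_ne (Finset.ne_of_mem_erase hi) with hlt | hgt
  · exact Submodule.smul_mem _ _ (Submodule.subset_span ⟨i, hlt, xx_fin i⟩)
  · rw [h.2 _ _ hgt, zero_smul]; exact zero_mem _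

lemma tri_yy (φ : SS F n →ₐ[F] SS F n) (σ : GL (Fin n) F) (h : IsU F n σ)
    (hφ : ∀ j : Fin n, φ (X (Sum.inr j)) =
      ∑ i : Fin n, ((σ⁻¹ : GL (Fin n) F) : Matrix (Fin n) (Fin n) F) j i • X (Sum.inr i))
    (j : ℕ) (hj : j < n) :
    φ (yy F n (n - 1 - j)) - yy F n (n - 1 - j) ∈
      Submodule.span F ((fun i => yy F n (n - 1 - i)) '' Set.Iio j) := by
  have h' := h.inv
  have hj' : n - 1 - j < n := by omega
  have := yy_fin (F := F) (⟨n - 1 - j, hj'⟩ : Fin n)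
  simp only at this
  rw [this, hφ, ← Finset.add_sum_erase _ _ (Finset.mem_univ (⟨n - 1 - j, hj'⟩ : Fin n)), h'.1,
    one_smul, add_sub_cancel_left]
  refine sum_mem fun i hi => ?_
  rcases lt_or_gt_of_ne (Finset.ne_of_mem_erase hi) with hlt | hgt
  · rw [h'.2 _ _ hlt, zero_smul]; exact zero_mem _
  · refine Submodule.smul_mem _ _ (Submodule.subset_span ⟨n - 1 - i, ?_, ?_⟩)
    · have : n - 1 - j < (i : ℕ) := hgt
      simp only [Set.mem_Iio]; omega
    · have := i.2
      simp only [show n - 1 - (n - 1 - (i : ℕ)) = i by omega]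
      exact yy_fin i

lemma linpow (a : ℕ) (c : Fin n → F) (z : Fin n → SS F n) :
    (∑ i, c i • z i) ^ (Fintype.card F) ^ a = ∑ i, c i • z i ^ (Fintype.card F) ^ a := by
  induction a with
  | zero => simp
  | succ a ih =>
    rw [pow_succ, pow_mul, ih]
    have := map_sum (FiniteField.frobeniusAlgHom F (SS F n))
      (fun i => c i • z i ^ (Fintype.card F) ^ a) Finset.univ
    simp only [map_smul] at this
    simp only [FiniteField.coe_frobeniusAlgHom] at this
    rw [this]
    simp only [pow_mul]

lemma UU_fin (a b : ℕ) : UU (Fintype.card F) n (xx F n) (yy F n) a b =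
    ∑ i : Fin n, X (Sum.inl i) ^ (Fintype.card F) ^ a * X (Sum.inr i) ^ (Fintype.card F) ^ b := by
  rw [UU, ← Fin.sum_univ_eq_sum_range
    (fun i => xx F n i ^ (Fintype.card F) ^ a * yy F n i ^ (Fintype.card F) ^ b)]
  simp_rw [xx_fin, yy_fin]

lemma gact_UU (σ : GL (Fin n) F) (a b : ℕ) :
    gact F n σ (UU (Fintype.card F) n (xx F n) (yy F n) a b) =
      UU (Fintype.card F) n (xx F n) (yy F n) a b := by
  rw [UU_fin, map_sum]
  simp_rw [map_mul, map_pow, gact_inl, gact_inr, linpow, Finset.sum_mul_sum]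
  rw [Finset.sum_comm]
  refine Finset.sum_congr rfl fun i _ => ?_
  rw [Finset.sum_comm]
  simp_rw [smul_mul_smul_comm, ← Finset.sum_smul, mul_inv_apply']
  simp

variable (F n) in
abbrev Ga : Type := ∀ j : Fin n, (Fin (j : ℕ) → F)

def mtu (t : Ga F n) : Matrix (Fin n) (Fin n) F := fun i j =>
  if h : (i : ℕ) < j then t j ⟨i, h⟩ else if i = j then 1 else 0

lemma mtu_det (t : Ga F n) : (mtu t).det = 1 := by
  rw [Matrix.det_of_upperTriangular]
  · simp [mtu]
  · intro i j hij
    have : (j : ℕ) < i := hij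
    simp only [mtu]
    rw [dif_neg (by omega), if_neg (by intro e; subst e; omega)]

noncomputable def mg (t : Ga F n) : GL (Fin n) F :=
  Matrix.GeneralLinearGroup.mkOfDetNeZero (mtu t) (by rw [mtu_det]; exact one_ne_zero)

lemma mg_coe (t : Ga F n) : ((mg t : GL (Fin n) F) : Matrix (Fin n) (Fin n) F) = mtu t := rfl

lemma mg_isU (t : Ga F n) : IsU F n (mg t) := by
  refine ⟨fun i => by simp [mg_coe, mtu], fun i j hij => ?_⟩
  have : (j : ℕ) < i := hij
  simp only [mg_coe, mtu]
  rw [dif_neg (by omega), if_neg (by intro e; subst e; omega)]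

lemma mg_inj : Function.Injective (mg : Ga F n → GL (Fin n) F) := by
  intro t t' h
  have h2 : mtu t = mtu t' := by rw [← mg_coe, ← mg_coe, h]
  funext j i
  have := congrFun (congrFun h2 ⟨i, i.2.trans j.2⟩) j
  simpa [mtu] using this

lemma Ga_card : Fintype.card (Ga F n) = ∏ i ∈ Finset.range n, (Fintype.card F) ^ i := by
  rw [Fintype.card_pi, ← Fin.prod_univ_eq_prod_range]; simp

lemma coeff_lin_inl (c d : Fin n → F)
    (h : ∑ i : Fin n, c i • (X (Sum.inl i) : SS F n) = ∑ i : Fin n, d i • X (Sum.inl i)) :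
    c = d := by
  funext k
  have := congrArg (coeff (Finsupp.single (Sum.inl k) 1)) h
  simpa [coeff_sum, coeff_X, Finsupp.single_left_inj] using this

lemma coeff_lin_inr (c d : Fin n → F)
    (h : ∑ i : Fin n, c i • (X (Sum.inr i) : SS F n) = ∑ i : Fin n, d i • X (Sum.inr i)) :
    c = d := by
  funext k
  have := congrArg (coeff (Finsupp.single (Sum.inr k) 1)) h
  simpa [coeff_sum, coeff_X, Finsupp.single_left_inj] using this

lemma yact_UU_inj (σ τ : GL (Fin n) F)
    (h : yact σ (UU (Fintype.card F) n (xx F n) (yy F n) 0 0) =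
      yact τ (UU (Fintype.card F) n (xx F n) (yy F n) 0 0)) : σ = τ := by
  rw [UU_fin] at h
  simp only [pow_zero, pow_one, map_sum, map_mul, yact_inl, yact_inr] at h
  have h2 : ((σ⁻¹ : GL (Fin n) F) : Matrix (Fin n) (Fin n) F) = (τ⁻¹ : GL (Fin n) F) := by
    funext i
    let ev : SS F n →ₐ[F] SS F n := aeval (Sum.elim (fun j => if j = i then 1 else 0)
      (fun j => X (Sum.inr j)))
    have h3 := congrArg ev h
    simp only [map_sum, map_mul, map_smul, ev, aeval_X, Sum.elim_inl, Sum.elim_inr, ite_mul,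
      one_mul, zero_mul, Finset.sum_ite_eq', Finset.mem_univ, if_true] at h3
    exact coeff_lin_inr _ _ h3
  have h4 : σ⁻¹ = τ⁻¹ := Units.ext h2
  exact inv_injective h4

end concrete

section generic
variable {K S : Type} [Field K] [Fintype K] [CommRing S] [Algebra K S]

lemma EE_integral (z : ℕ → S) (B : Subalgebra K S) (k : ℕ)
    (h : ∀ j ≤ k, EE K z j (z j) ∈ B) : IsIntegral B (z k) := by
  obtain ⟨c, h1, -, hc, hT⟩ := EE_coeff (K := K) z k
  have hcB : ∀ i, c i ∈ B := by
    intro i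
    refine Algebra.adjoin_le ?_ (hc i)
    rintro _ ⟨l, hl, rfl⟩
    exact h l (le_of_lt hl)
  have hq : 1 < Fintype.card K := Fintype.one_lt_card
  rcases subsingleton_or_nontrivial S with hS | hS
  · exact ⟨1, Polynomial.monic_one, Subsingleton.elim _ _⟩
  let lo : Polynomial B := ∑ i ∈ Finset.range k,
    Polynomial.C (⟨c i, hcB i⟩ : B) * Polynomial.X ^ (Fintype.card K) ^ i -
      Polynomial.C (⟨EE K z k (z k), h k le_rfl⟩ : B)
  refine ⟨Polynomial.X ^ (Fintype.card K) ^ k + lo, Polynomial.monic_X_pow_add ?_, ?_⟩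
  · refine lt_of_le_of_lt (Polynomial.degree_sub_le _ _) (max_lt ?_ ?_)
    · refine lt_of_le_of_lt (Polynomial.degree_sum_le _ _) ?_
      rw [Finset.sup_lt_iff (by exact_mod_cast WithBot.bot_lt_coe _)]
      intro i hi
      refine lt_of_le_of_lt (Polynomial.degree_C_mul_X_pow_le _ _) ?_
      exact_mod_cast Nat.pow_lt_pow_right hq (by simpa using hi)
    · refine lt_of_le_of_lt Polynomial.degree_C_le ?_
      have : 0 < (Fintype.card K) ^ k := by positivity
      exact_mod_cast this
  · have h2 := hT (z k)
    rw [Finset.sum_range_succ, h1, one_mul] at h2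
    simp only [lo, Polynomial.eval₂_add, Polynomial.eval₂_sub, Polynomial.eval₂_finset_sum,
      Polynomial.eval₂_mul, Polynomial.eval₂_C, Polynomial.eval₂_pow, Polynomial.eval₂_X]
    have e : ∀ b : B, algebraMap B S b = (b : S) := fun _ => rfl
    simp only [e]
    rw [h2]; ring

lemma prod_JJ {M : Type} [CommMonoid M] (n : ℕ) (hn : 2 ≤ n) (f : ℤ → M) :
    ∏ j : JJ n, f j = (∏ i ∈ Finset.range (n - 1), f i) * ∏ i ∈ Finset.Icc 1 (n - 2), f (-(i : ℤ)) := by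
  rw [Finset.prod_coe_sort (Finset.Icc (-((n : ℤ) - 2)) ((n : ℤ) - 2)) f,
    ← Finset.prod_filter_mul_prod_filter_not _ (fun j : ℤ => 0 ≤ j)]
  congr 1
  · refine Finset.prod_nbij' (fun j => j.toNat) (fun i => (i : ℤ)) ?_ ?_ ?_ ?_ ?_
    · intro j hj; simp at hj ⊢; omega
    · intro j hj; simp at hj ⊢; omega
    · intro j hj; simp at hj ⊢; omega
    · intro j hj; simp
    · intro j hj; simp at hj; congr 1; omega
  · refine Finset.prod_nbij' (fun j => (-j).toNat) (fun i => -(i : ℤ)) ?_ ?_ ?_ ?_ ?_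
    · intro j hj; simp at hj ⊢; omega
    · intro j hj; simp at hj ⊢; omega
    · intro j hj; simp at hj ⊢; omega
    · intro j hj; simp
    · intro j hj; simp at hj; congr 1; omega

lemma sum_half' (m : ℕ) : ∑ i ∈ Finset.range (m + 1), (m + 2 - i) / 2 +
    ∑ i ∈ Finset.Icc 1 m, (m + 2 - i) / 2 = ∑ i ∈ Finset.range (m + 2), i := by
  have e1 : ∑ i ∈ Finset.range (m + 1), (m + 2 - i) / 2 =
      ∑ i ∈ Finset.range (m + 1), (i + 2) / 2 := by
    rw [← Finset.sum_range_reflect]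
    refine Finset.sum_congr rfl fun i hi => ?_
    simp at hi; congr 1; omega
  have e2 : ∑ i ∈ Finset.Icc 1 m, (m + 2 - i) / 2 = ∑ i ∈ Finset.range m, (i + 2) / 2 := by
    refine Finset.sum_nbij' (fun i => m - i) (fun i => m - i) ?_ ?_ ?_ ?_ ?_ <;>
      intro i hi <;> simp at hi ⊢ <;> omega
  rw [e1, e2]
  clear e1 e2
  induction m with
  | zero => decide
  | succ m ih =>
    simp only [Finset.sum_range_succ] at ih ⊢
    omega

lemma prod_NN (q n : ℕ) (hn : 2 ≤ n) : ∏ j : JJ n, NN q n j = ∏ i ∈ Finset.range n, q ^ i := by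
  obtain ⟨m, rfl⟩ : ∃ m, n = m + 2 := ⟨n - 2, by omega⟩
  rw [Finset.prod_pow_eq_pow_sum, ← sum_half' m]
  have := prod_JJ (m + 2) hn (fun j => q ^ ((m + 2 - j.natAbs) / 2))
  simp only [NN]
  rw [this]
  simp [Finset.prod_pow_eq_pow_sum, pow_add]

end generic

section concrete
variable (F : Type) [Field F] [Fintype F] (n : ℕ)

noncomputable def ff (i : ℕ) : SS F n := EE F (xx F n) i (xx F n i)
noncomputable def gg (i : ℕ) : SS F n := EE F (fun i => yy F n (n - 1 - i)) i (yy F n (n - 1 - i))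
noncomputable def vv : Fin n ⊕ Fin n → SS F n := Sum.elim (fun i => ff F n i) (fun i => gg F n i)
noncomputable def io : SS F n →ₐ[F] SS F n := aeval (vv F n)
abbrev Bx : Type := ∀ j : JJ n, Fin (NN (Fintype.card F) n j)
noncomputable def wu (j : JJ n) : SS F n := ww (Fintype.card F) n (xx F n) (yy F n) j
noncomputable def mm (c : Bx F n) : SS F n := ∏ j, wu F n j ^ (c j : ℕ)

variable {F n}

lemma ff_mem (k : ℕ) (hk : k < n) : ff F n k ∈ (io F n).range :=
  ⟨X (Sum.inl ⟨k, hk⟩), by simp [io, vv]⟩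

lemma gg_mem (k : ℕ) (hk : k < n) : gg F n k ∈ (io F n).range :=
  ⟨X (Sum.inr ⟨k, hk⟩), by simp [io, vv]⟩

lemma io_inj : Function.Injective (io F n) := by
  have hB : (io F n).range = Algebra.adjoin F (Set.range (vv F n)) :=
    (Algebra.adjoin_range_eq_range_aeval F (vv F n)).symm
  have hintg : Algebra.IsIntegral (Algebra.adjoin F (Set.range (vv F n))) (SS F n) := by
    rw [← hB]
    constructor
    have : (⊤ : Subalgebra F (SS F n)) ≤
        (integralClosure (io F n).range (SS F n)).restrictScalars F := by
      rw [← MvPolynomial.adjoin_range_X, Algebra.adjoin_le_iff]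
      rintro _ ⟨i | i, rfl⟩
      · change IsIntegral (io F n).range (X (Sum.inl i) : SS F n)
        rw [← xx_fin]
        exact EE_integral (xx F n) _ _ fun j hj => ff_mem j (lt_of_le_of_lt hj i.2)
      · change IsIntegral (io F n).range (X (Sum.inr i) : SS F n)
        rw [← yy_fin]
        have h := EE_integral (fun i => yy F n (n - 1 - i)) (io F n).range (n - 1 - i)
          fun j hj => gg_mem j (by have := i.2; omega)
        have := i.2
        simpa only [show n - 1 - (n - 1 - (i : ℕ)) = i by omega] using h
    exact fun s => this trivial
  have halg : Algebra.IsAlgebraic (Algebra.adjoin F (Set.range (vv F n))) (SS F n) :=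
    hintg.isAlgebraic
  have := Algebra.IsAlgebraic.isTranscendenceBasis_of_le_trdeg_of_finite F (vv F n)
    (by rw [MvPolynomial.trdeg_of_isDomain]; simp)
  exact this.1

lemma yact_fix (σ : GL (Fin n) F) (h : IsU F n σ) (b : SS F n) (hb : b ∈ (io F n).range) :
    yact σ b = b := by
  have hB : (io F n).range = Algebra.adjoin F (Set.range (vv F n)) :=
    (Algebra.adjoin_range_eq_range_aeval F (vv F n)).symm
  have : (io F n).range ≤ AlgHom.equalizer (yact σ) (AlgHom.id F (SS F n)) := by
    rw [hB, Algebra.adjoin_le_iff]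
    rintro _ ⟨i | i, rfl⟩
    · refine EE_inv (yact σ) (xx F n) n (fun j hj => ?_) i i.2
      rw [xx, dif_pos hj, yact_inl, sub_self]; exact zero_mem _
    · exact EE_inv (yact σ) (fun i => yy F n (n - 1 - i)) n
        (tri_yy (yact σ) σ h (yact_inr σ)) i i.2
  exact this hb

lemma gact_fix_vv (σ : GL (Fin n) F) (h : IsU F n σ) (i : Fin n ⊕ Fin n) :
    gact F n σ (vv F n i) = vv F n i := by
  rcases i with i | i
  · exact EE_inv (gact F n σ) (xx F n) n (tri_xx _ σ h (gact_inl σ)) i i.2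
  · exact EE_inv (gact F n σ) (fun i => yy F n (n - 1 - i)) n
        (tri_yy _ σ h (gact_inr σ)) i i.2

lemma AA_bounded (hn : 2 ≤ n) (s : SS F n)
    (hs : s ∈ Algebra.adjoin (io F n).range (Set.range (wu F n))) :
    ∃ p : Bx F n → (io F n).range, s = ∑ c, (p c : SS F n) * mm F n c :=
  adjoin_bounded (io F n).range (wu F n) (wwt (Fintype.card F) n) (NN (Fintype.card F) n)
    (ww_rel n (xx F n) (yy F n) (io F n).range ff_mem gg_mem hn) s hs

lemma mm_indep (hn : 2 ≤ n) (b : Bx F n → SS F n) (hb : ∀ c, b c ∈ (io F n).range)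
    (h0 : ∑ c, b c * mm F n c = 0) : b = 0 := by
  let A := Algebra.adjoin (io F n).range (Set.range (wu F n))
  have hw : ∀ j, wu F n j ∈ A := fun j => Algebra.subset_adjoin (Set.mem_range_self j)
  let m : Bx F n → A := fun c =>
    ⟨mm F n c, prod_mem fun j _ => pow_mem (hw j) _⟩
  let ψ : Ga F n → A →* SS F n := fun g => (yact (mg g) : SS F n →* SS F n).comp A.toSubmonoid.subtype
  have hψ : Function.Injective ψ := by
    intro g g' h
    let j0 : JJ n := ⟨0, by simp; omega⟩
    have h1 := DFunLike.congr_fun h ⟨wu F n j0, hw j0⟩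
    exact mg_inj (yact_UU_inj _ _ h1)
  refine ded ψ hψ m ?_ ?_ b ?_
  · rw [Ga_card, Fintype.card_pi, ← prod_NN _ n hn]; simp
  · intro v hv s
    obtain ⟨p, hp⟩ := AA_bounded hn (s : SS F n) s.2
    have e : ∀ g, ψ g s = ∑ c, (p c : SS F n) * ψ g (m c) := by
      intro g
      change yact (mg g) (s : SS F n) = ∑ c, (p c : SS F n) * yact (mg g) (m c : SS F n)
      rw [hp, map_sum]
      simp_rw [map_mul, fun c => yact_fix (mg g) (mg_isU g) (p c : SS F n) (p c).2]
      rfl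
    simp_rw [e, Finset.mul_sum]
    rw [Finset.sum_comm]
    refine Finset.sum_eq_zero fun c _ => ?_
    have := congrArg (fun t => (p c : SS F n) * t) (hv c)
    simp only [mul_zero, Finset.mul_sum] at this
    rw [← this]
    refine Finset.sum_congr rfl fun g _ => by ring
  · intro g
    have := congrArg (yact (mg g)) h0
    rw [map_sum, map_zero] at this
    simp_rw [map_mul, fun c => yact_fix (mg g) (mg_isU g) (b c) (hb c)] at this
    exact this

variable (F n) in
noncomputable def Psi : (Bx F n → SS F n) →ₗ[F] SS F n where
  toFun p := ∑ c, io F n (p c) * mm F n c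
  map_add' p q := by simp [add_mul, Finset.sum_add_distrib]
  map_smul' a p := by simp [Finset.smul_sum]

lemma Psi_apply (p : Bx F n → SS F n) : Psi F n p = ∑ c, io F n (p c) * mm F n c := rfl

lemma Psi_inj (hn : 2 ≤ n) : Function.Injective (Psi F n) := by
  rw [← LinearMap.ker_eq_bot, LinearMap.ker_eq_bot']
  intro p hp
  have := mm_indep hn (fun c => io F n (p c)) (fun c => ⟨p c, rfl⟩) hp
  funext c
  apply io_inj
  rw [congrFun this c]; simp

lemma AA_range (hn : 2 ≤ n) (s : SS F n)
    (hs : s ∈ Algebra.adjoin (io F n).range (Set.range (wu F n))) : ∃ p, Psi F n p = s := by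
  obtain ⟨p, hp⟩ := AA_bounded hn s hs
  choose p' hp' using fun c => (p c).2
  refine ⟨p', ?_⟩
  rw [hp, Psi_apply]
  exact Finset.sum_congr rfl fun c _ => by rw [← hp' c]; rfl

lemma hgen1 : Algebra.adjoin F (xx F n '' Set.Iio n ∪ yy F n '' Set.Iio n) = ⊤ := by
  rw [← top_le_iff, ← MvPolynomial.adjoin_range_X]
  refine Algebra.adjoin_mono ?_
  rintro _ ⟨i | i, rfl⟩
  · exact Or.inl ⟨i, i.2, xx_fin i⟩
  · exact Or.inr ⟨i, i.2, yy_fin i⟩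

lemma hgen2 : Algebra.adjoin F ((fun i => yy F n (n - 1 - i)) '' Set.Iio n ∪
    (fun i => xx F n (n - 1 - i)) '' Set.Iio n) = ⊤ := by
  rw [← top_le_iff, ← MvPolynomial.adjoin_range_X]
  refine Algebra.adjoin_mono ?_
  rintro _ ⟨i | i, rfl⟩
  · have := i.2
    refine Or.inr ⟨n - 1 - i, by simp only [Set.mem_Iio]; omega, ?_⟩
    simp only [show n - 1 - (n - 1 - (i : ℕ)) = i by omega]
    exact xx_fin i
  · have := i.2
    refine Or.inl ⟨n - 1 - i, by simp only [Set.mem_Iio]; omega, ?_⟩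
    simp only [show n - 1 - (n - 1 - (i : ℕ)) = i by omega]
    exact yy_fin i

lemma UU0 (k : ℕ) : ∑ i ∈ Finset.range n, xx F n i ^ (Fintype.card F) ^ k * yy F n i =
    UU (Fintype.card F) n (xx F n) (yy F n) k 0 := by simp [UU]

lemma UU0' (k : ℕ) : ∑ i ∈ Finset.range n, yy F n (n - 1 - i) ^ (Fintype.card F) ^ k *
    xx F n (n - 1 - i) = UU (Fintype.card F) n (xx F n) (yy F n) 0 k := by
  rw [Finset.sum_range_reflect (fun i => yy F n i ^ (Fintype.card F) ^ k * xx F n i)]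
  simp [UU, mul_comm]

lemma loc1 (hn : 2 ≤ n) (r : SS F n) (hr : ∀ σ, IsU F n σ → gact F n σ r = r) :
    ∃ a : ℕ, ∃ p, (∏ k ∈ Finset.range n, ff F n k) ^ a * r = Psi F n p := by
  obtain ⟨a, ha⟩ := loc (K := F) n (xx F n) (yy F n) hgen1 (G := Ga F n)
    (fun t => gact F n (mg t)) (fun t => tri_xx _ _ (mg_isU t) (gact_inl _))
    (fun t t' h => by
      apply mg_inj
      apply Units.ext
      funext i j
      have := h j j.2
      rw [xx_fin, gact_inl, gact_inl] at this
      exact congrFun (coeff_lin_inl _ _ this) i)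
    Ga_card (fun t k _ => by rw [UU0]; exact gact_UU _ _ _) r (fun t => hr _ (mg_isU t))
  refine ⟨a, ?_⟩
  have hle : Algebra.adjoin F ((fun k => EE F (xx F n) k (xx F n k)) '' Set.Iio n ∪
        (fun k => ∑ i ∈ Finset.range n, xx F n i ^ (Fintype.card F) ^ k * yy F n i) '' Set.Iio n) ≤
      (Algebra.adjoin (io F n).range (Set.range (wu F n))).restrictScalars F := by
    rw [Algebra.adjoin_le_iff]
    rintro _ (⟨k, hk, rfl⟩ | ⟨k, hk, rfl⟩)
    · exact Subalgebra.algebraMap_mem (Algebra.adjoin (io F n).range (Set.range (wu F n)))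
        (⟨_, ff_mem k hk⟩ : (io F n).range)
    · simp only [UU0]
      exact UU_mem_adjoin n (xx F n) (yy F n) (io F n).range ff_mem gg_mem k 0 hk (by omega) hn
  obtain ⟨p, hp⟩ := AA_range hn _ (hle ha)
  exact ⟨p, hp.symm⟩

lemma loc2 (hn : 2 ≤ n) (r : SS F n) (hr : ∀ σ, IsU F n σ → gact F n σ r = r) :
    ∃ a : ℕ, ∃ p, (∏ k ∈ Finset.range n, gg F n k) ^ a * r = Psi F n p := by
  obtain ⟨a, ha⟩ := loc (K := F) n (fun i => yy F n (n - 1 - i)) (fun i => xx F n (n - 1 - i)) hgen2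
    (G := Ga F n)
    (fun t => gact F n (mg t)) (fun t => tri_yy _ _ (mg_isU t) (gact_inr _))
    (fun t t' h => by
      apply mg_inj
      apply inv_injective
      apply Units.ext
      funext i
      have hi := i.2
      have := h (n - 1 - i) (by omega)
      simp only [show n - 1 - (n - 1 - (i : ℕ)) = i by omega] at this
      rw [yy_fin, gact_inr, gact_inr] at this
      exact coeff_lin_inr _ _ this)
    Ga_card (fun t k _ => by rw [UU0']; exact gact_UU _ _ _) r (fun t => hr _ (mg_isU t))
  refine ⟨a, ?_⟩
  have hle : Algebra.adjoin F ((fun k => EE F (fun i => yy F n (n - 1 - i)) k (yy F n (n - 1 - k)))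
        '' Set.Iio n ∪ (fun k => ∑ i ∈ Finset.range n,
          yy F n (n - 1 - i) ^ (Fintype.card F) ^ k * xx F n (n - 1 - i)) '' Set.Iio n) ≤
      (Algebra.adjoin (io F n).range (Set.range (wu F n))).restrictScalars F := by
    rw [Algebra.adjoin_le_iff]
    rintro _ (⟨k, hk, rfl⟩ | ⟨k, hk, rfl⟩)
    · exact Subalgebra.algebraMap_mem (Algebra.adjoin (io F n).range (Set.range (wu F n)))
        (⟨_, gg_mem k hk⟩ : (io F n).range)
    · simp only [UU0']
      exact UU_mem_adjoin n (xx F n) (yy F n) (io F n).range ff_mem gg_mem 0 k (by omega) hk hn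
  obtain ⟨p, hp⟩ := AA_range hn _ (hle ha)
  exact ⟨p, hp.symm⟩

lemma relprime_XY : IsRelPrime (∏ k : Fin n, (X (Sum.inl k) : SS F n))
    (∏ k : Fin n, (X (Sum.inr k) : SS F n)) := by
  refine IsRelPrime.prod_left fun i _ => IsRelPrime.prod_right fun j _ => ?_
  refine (Irreducible.isRelPrime_iff_not_dvd (MvPolynomial.X_prime).irreducible).2 ?_
  rw [MvPolynomial.X_dvd_X]
  simp

lemma main_range (hn : 2 ≤ n) (r : SS F n) (hr : ∀ σ, IsU F n σ → gact F n σ r = r) :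
    ∃ p, Psi F n p = r := by
  obtain ⟨a, p, hp⟩ := loc1 hn r hr
  obtain ⟨b, p', hp'⟩ := loc2 hn r hr
  set DX : SS F n := ∏ k : Fin n, X (Sum.inl k) with hDX
  set DY : SS F n := ∏ k : Fin n, X (Sum.inr k) with hDY
  have e1 : io F n DX = ∏ k ∈ Finset.range n, ff F n k := by
    rw [← Fin.prod_univ_eq_prod_range]; simp [hDX, io, vv]
  have e2 : io F n DY = ∏ k ∈ Finset.range n, gg F n k := by
    rw [← Fin.prod_univ_eq_prod_range]; simp [hDY, io, vv]
  have hmul : ∀ (d : SS F n) p, Psi F n (fun c => d * p c) = io F n d * Psi F n p := by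
    intro d p
    simp [Psi_apply, Finset.mul_sum, mul_assoc]
  have h1 : (fun c => DY ^ b * p c) = fun c => DX ^ a * p' c := by
    apply Psi_inj hn
    rw [hmul, hmul, ← hp, ← hp', map_pow, map_pow, e1, e2]
    ring
  have h2 : ∀ c, DX ^ a ∣ p c := by
    intro c
    have h3 : DX ^ a ∣ DY ^ b * p c := ⟨p' c, congrFun h1 c⟩
    exact (IsRelPrime.pow relprime_XY).dvd_of_dvd_mul_left h3
  choose p'' hp'' using h2
  refine ⟨p'', ?_⟩
  have h4 : io F n (DX ^ a) * Psi F n p'' = io F n (DX ^ a) * r := by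
    rw [← hmul, ← (funext hp'' : p = _), ← hp, map_pow, e1]
  refine mul_left_cancel₀ ?_ h4
  rw [Ne, map_eq_zero_iff _ io_inj]
  exact pow_ne_zero _ (Finset.prod_ne_zero_iff.2 fun i _ => X_ne_zero _)

lemma mem_invBihom_gact (p : Bx F n → SS F n) (σ : GL (Fin n) F) (h : IsU F n σ) :
    gact F n σ (Psi F n p) = Psi F n p := by
  rw [Psi_apply, map_sum]
  refine Finset.sum_congr rfl fun c _ => ?_
  rw [map_mul]
  congr 1
  · have : (gact F n σ).comp (io F n) = io F n := by
      apply MvPolynomial.algHom_ext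
      intro i
      simp only [AlgHom.comp_apply, io, aeval_X]
      exact gact_fix_vv σ h i
    exact DFunLike.congr_fun this (p c)
  · rw [mm, map_prod]
    refine Finset.prod_congr rfl fun j _ => ?_
    rw [map_pow]
    congr 1
    exact gact_UU σ _ _

end concrete

section series
open Classical in
noncomputable def ind (δ : Fin 2 →₀ ℕ) (A : ℕ → Prop) : MvPowerSeries (Fin 2) ℤ :=
  fun m => if ∃ c, A c ∧ m = c • δ then 1 else 0

open Classical in
lemma coeff_ind (δ : Fin 2 →₀ ℕ) (A : ℕ → Prop) (m : Fin 2 →₀ ℕ) :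
    MvPowerSeries.coeff m (ind δ A) = if ∃ c, A c ∧ m = c • δ then 1 else 0 := rfl

lemma smul_inj_delta {δ : Fin 2 →₀ ℕ} (hδ : δ ≠ 0) {a b : ℕ} (h : a • δ = b • δ) : a = b := by
  obtain ⟨i, hi⟩ := Finsupp.ne_iff.1 hδ
  have := DFunLike.congr_fun h i
  simp only [Finsupp.smul_apply, smul_eq_mul] at this
  exact Nat.eq_of_mul_eq_mul_right (Nat.pos_of_ne_zero hi) this

lemma ind_unbounded {δ : Fin 2 →₀ ℕ} (hδ : δ ≠ 0) :
    (1 - MvPowerSeries.monomial δ (1 : ℤ)) * ind δ (fun _ => True) = 1 := by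
  classical
  ext m
  rw [sub_mul, one_mul, map_sub, MvPowerSeries.coeff_monomial_mul, MvPowerSeries.coeff_one,
    coeff_ind, coeff_ind, one_mul]
  by_cases hm : m = 0
  · subst hm
    have : ¬ δ ≤ 0 := by simpa using hδ
    rw [if_pos ⟨0, trivial, by simp⟩, if_neg this, if_pos rfl, sub_zero]
  · rw [if_neg hm]
    by_cases h : ∃ c : ℕ, True ∧ m = c • δ
    · obtain ⟨c, -, rfl⟩ := h
      obtain ⟨c, rfl⟩ : ∃ d, c = d + 1 := ⟨c - 1, by
        rcases c with _ | c
        · simp at hm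
        · simp⟩
      rw [if_pos ⟨_, trivial, rfl⟩, if_pos (by rw [add_smul, one_smul]; exact le_add_self),
        if_pos ⟨c, trivial, by rw [add_smul, one_smul, add_tsub_cancel_right]⟩, sub_self]
    · rw [if_neg h]
      by_cases h1 : δ ≤ m
      · rw [if_pos h1, if_neg, sub_self]
        rintro ⟨c, -, hc⟩
        exact h ⟨c + 1, trivial, by rw [add_smul, one_smul, ← hc, tsub_add_cancel_of_le h1]⟩
      · rw [if_neg h1, sub_self]

lemma ind_bounded {δ : Fin 2 →₀ ℕ} (hδ : δ ≠ 0) (N : ℕ) :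
    (1 - MvPowerSeries.monomial δ (1 : ℤ)) * ind δ (fun c => c < N) =
      1 - MvPowerSeries.monomial (N • δ) (1 : ℤ) := by
  classical
  have hp : ∀ c : ℕ, (MvPowerSeries.monomial δ (1 : ℤ)) ^ c = MvPowerSeries.monomial (c • δ) 1 := by
    intro c
    induction c with
    | zero => simp
    | succ c ih => rw [pow_succ, ih, MvPowerSeries.monomial_mul_monomial, add_smul]; simp
  have : ind δ (fun c => c < N) = ∑ c ∈ Finset.range N, (MvPowerSeries.monomial δ (1 : ℤ)) ^ c := by
    ext m
    rw [map_sum, coeff_ind]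
    simp_rw [hp, MvPowerSeries.coeff_monomial]
    by_cases h : ∃ c, c < N ∧ m = c • δ
    · rw [if_pos h]
      obtain ⟨c, hc, rfl⟩ := h
      rw [Finset.sum_eq_single c]
      · simp
      · intro b _ hb
        rw [if_neg]
        intro h
        exact hb (smul_inj_delta hδ h).symm
      · intro h; simp at h; omega
    · rw [if_neg h, Finset.sum_eq_zero]
      intro c hc
      rw [if_neg]
      intro h'
      exact h ⟨c, by simpa using hc, h'⟩
  rw [this, mul_neg_geom_sum, hp]

lemma coeff_prod_ind {ι : Type} [Fintype ι] (δ : ι → Fin 2 →₀ ℕ) (hδ : ∀ j, δ j ≠ 0)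
    (A : ι → ℕ → Prop) (m : Fin 2 →₀ ℕ) :
    MvPowerSeries.coeff m (∏ j, ind (δ j) (A j)) =
      (Nat.card {a : ι → ℕ // (∀ j, A j (a j)) ∧ ∑ j, a j • δ j = m} : ℤ) := by
  classical
  rw [MvPowerSeries.coeff_prod]
  simp_rw [coeff_ind, Finset.prod_ite_zero, Finset.prod_const_one]
  rw [Finset.sum_boole]
  congr 1
  rw [← Nat.card_eq_finsetCard]
  symm
  refine Nat.card_eq_of_bijective (fun a => ⟨Finsupp.equivFunOnFinite.symm
    (fun j => a.1 j • δ j), ?_⟩) ⟨?_, ?_⟩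
  · rw [Finset.mem_filter, Finset.mem_finsuppAntidiag]
    exact ⟨⟨by simpa using a.2.2, by simp⟩, fun i _ => ⟨a.1 i, a.2.1 i, rfl⟩⟩
  · intro a b hab
    ext j
    have := DFunLike.congr_fun (Subtype.ext_iff.1 hab) j
    exact smul_inj_delta (hδ j) this
  · rintro ⟨l, hl⟩
    rw [Finset.mem_filter, Finset.mem_finsuppAntidiag] at hl
    choose c hc hl2 using fun i => hl.2 i (Finset.mem_univ i)
    refine ⟨⟨c, hc, ?_⟩, ?_⟩
    · rw [← hl.1.1]
      exact Finset.sum_congr rfl fun i _ => (hl2 i).symm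
    · ext1
      ext1 i
      exact (hl2 i).symm
end series

section homog
variable (F : Type) [Field F] [Fintype F] (n : ℕ)

def BH (m : Fin 2 →₀ ℕ) (r : SS F n) : Prop :=
  IsWeightedHomogeneous (Sum.elim (fun _ : Fin n => 1) (fun _ : Fin n => 0)) r (m 0) ∧
  IsWeightedHomogeneous (Sum.elim (fun _ : Fin n => 0) (fun _ : Fin n => 1)) r (m 1)

variable {F n}

lemma BH.mul {m m' : Fin 2 →₀ ℕ} {r r' : SS F n} (h : BH F n m r) (h' : BH F n m' r') :
    BH F n (m + m') (r * r') := ⟨h.1.mul h'.1, h.2.mul h'.2⟩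

lemma BH.pow {m : Fin 2 →₀ ℕ} {r : SS F n} (h : BH F n m r) (k : ℕ) :
    BH F n (k • m) (r ^ k) := ⟨h.1.pow k, h.2.pow k⟩

lemma BH.sub {m : Fin 2 →₀ ℕ} {r r' : SS F n} (h : BH F n m r) (h' : BH F n m r') :
    BH F n m (r - r') := ⟨h.1.sub h'.1, h.2.sub h'.2⟩

lemma BH.sum {ι : Type} {s : Finset ι} {m : Fin 2 →₀ ℕ} {r : ι → SS F n}
    (h : ∀ i ∈ s, BH F n m (r i)) : BH F n m (∑ i ∈ s, r i) :=
  ⟨IsWeightedHomogeneous.sum _ _ _ fun i hi => (h i hi).1,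
    IsWeightedHomogeneous.sum _ _ _ fun i hi => (h i hi).2⟩

lemma BH.prod {ι : Type} {s : Finset ι} {m : ι → Fin 2 →₀ ℕ} {r : ι → SS F n}
    (h : ∀ i ∈ s, BH F n (m i) (r i)) : BH F n (∑ i ∈ s, m i) (∏ i ∈ s, r i) := by
  constructor
  · rw [Finsupp.finsetSum_apply]
    exact IsWeightedHomogeneous.prod _ _ _ fun i hi => (h i hi).1
  · rw [Finsupp.finsetSum_apply]
    exact IsWeightedHomogeneous.prod _ _ _ fun i hi => (h i hi).2

lemma BH_xx (i : ℕ) : BH F n (Finsupp.single 0 1) (xx F n i) := by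
  rw [xx]
  split_ifs with h
  · exact ⟨by simp; exact isWeightedHomogeneous_X F _ _, by simp; exact isWeightedHomogeneous_X F _ _⟩
  · exact ⟨isWeightedHomogeneous_zero _ _ _, isWeightedHomogeneous_zero _ _ _⟩

lemma BH_yy (i : ℕ) : BH F n (Finsupp.single 1 1) (yy F n i) := by
  rw [yy]
  split_ifs with h
  · exact ⟨by simp; exact isWeightedHomogeneous_X F _ _, by simp; exact isWeightedHomogeneous_X F _ _⟩
  · exact ⟨isWeightedHomogeneous_zero _ _ _, isWeightedHomogeneous_zero _ _ _⟩

lemma BH_EE (z : ℕ → SS F n) (m : Fin 2 →₀ ℕ) (hz : ∀ i, BH F n m (z i)) (k : ℕ) (T : SS F n)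
    (hT : BH F n m T) : BH F n ((Fintype.card F) ^ k • m) (EE F z k T) := by
  induction k generalizing T with
  | zero => simpa [EE_zero] using hT
  | succ k ih =>
    have hq : 0 < Fintype.card F := Fintype.card_pos
    rw [EE_succ]
    refine BH.sub ?_ ?_
    · have := (ih T hT).pow (Fintype.card F)
      rwa [smul_smul, ← pow_succ'] at this
    · have := ((ih _ (hz k)).pow (Fintype.card F - 1)).mul (ih T hT)
      rwa [← succ_nsmul, Nat.sub_add_cancel hq, smul_smul, ← pow_succ'] at this

variable (F n) in
noncomputable def dl : (Fin n ⊕ Fin n) ⊕ JJ n → Fin 2 →₀ ℕ :=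
  Sum.elim (Sum.elim (fun i => Finsupp.single 0 ((Fintype.card F) ^ (i : ℕ)))
    (fun i => Finsupp.single 1 ((Fintype.card F) ^ (i : ℕ))))
    (fun j => Finsupp.single 0 ((Fintype.card F) ^ (j : ℤ).toNat) +
      Finsupp.single 1 ((Fintype.card F) ^ (-(j : ℤ)).toNat))

lemma dl_ne (j) : dl F n j ≠ 0 := by
  have hq : ∀ k, (Fintype.card F) ^ k ≠ 0 := fun k => pow_ne_zero _ Fintype.card_ne_zero
  rcases j with (i | i) | j
  · simp [dl]
  · simp [dl]
  · intro h
    have := DFunLike.congr_fun h 0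
    simp [dl] at this

lemma BH_vv (i) : BH F n (dl F n (Sum.inl i)) (vv F n i) := by
  rcases i with i | i
  · have := BH_EE (xx F n) _ BH_xx i _ (BH_xx i)
    simpa [dl, vv, ff] using this
  · have := BH_EE (fun i => yy F n (n - 1 - i)) _ (fun i => BH_yy _) i _ (BH_yy (n - 1 - i))
    simpa [dl, vv, gg] using this

lemma BH_wu (j) : BH F n (dl F n (Sum.inr j)) (wu F n j) := by
  rw [wu, ww, UU]
  refine BH.sum fun i _ => ?_
  have := ((BH_xx (F := F) (n := n) i).pow ((Fintype.card F) ^ (j : ℤ).toNat)).mul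
    ((BH_yy i).pow ((Fintype.card F) ^ (-(j : ℤ)).toNat))
  simpa [dl] using this

variable (F n) in
noncomputable def bb : Module.Basis (Σ _ : Bx F n, (Fin n ⊕ Fin n →₀ ℕ)) F (Bx F n → SS F n) :=
  Pi.basis fun _ => basisMonomials _ F

variable (F n) in
noncomputable def ee (i : Σ _ : Bx F n, (Fin n ⊕ Fin n →₀ ℕ)) : SS F n := Psi F n (bb F n i)

lemma ee_eq (c : Bx F n) (a : Fin n ⊕ Fin n →₀ ℕ) :
    ee F n ⟨c, a⟩ = (∏ i, vv F n i ^ a i) * ∏ j, wu F n j ^ (c j : ℕ) := by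
  classical
  rw [ee, bb, Pi.basis_apply, Psi_apply, Finset.sum_eq_single c]
  · simp only [Pi.single_eq_same, coe_basisMonomials, io, mm]
    rw [aeval_monomial, map_one, one_mul, Finsupp.prod_fintype _ _ (by simp)]
  · intro b _ hb
    simp [Pi.single_eq_of_ne hb]
  · simp

variable (F n) in
noncomputable def dg (i : Σ _ : Bx F n, (Fin n ⊕ Fin n →₀ ℕ)) : Fin 2 →₀ ℕ :=
  ∑ k, i.2 k • dl F n (Sum.inl k) + ∑ j, (i.1 j : ℕ) • dl F n (Sum.inr j)

lemma BH_ee (i) : BH F n (dg F n i) (ee F n i) := by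
  obtain ⟨c, a⟩ := i
  rw [ee_eq]
  exact (BH.prod fun i _ => (BH_vv i).pow _).mul (BH.prod fun i _ => (BH_wu i).pow _)

lemma ee_indep (hn : 2 ≤ n) : LinearIndependent F (ee F n) :=
  (bb F n).linearIndependent.map' (Psi F n) (LinearMap.ker_eq_bot.2 (Psi_inj hn))

lemma ee_span : Submodule.span F (Set.range (ee F n)) = LinearMap.range (Psi F n) := by
  have : Set.range (ee F n) = Psi F n '' Set.range (bb F n) := by
    rw [← Set.range_comp]; rfl
  rw [this, ← Submodule.map_span, (bb F n).span_eq, Submodule.map_top]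

lemma mem_inv (d e : ℕ) (r : SS F n) : r ∈ invBihom F n d e ↔
    (IsWeightedHomogeneous (Sum.elim (fun _ : Fin n => 1) (fun _ : Fin n => 0)) r d ∧
     IsWeightedHomogeneous (Sum.elim (fun _ : Fin n => 0) (fun _ : Fin n => 1)) r e) ∧
     ∀ σ, IsU F n σ → gact F n σ r = r := by
  simp only [invBihom, Submodule.mem_inf, mem_weightedHomogeneousSubmodule, Submodule.mem_iInf,
    LinearMap.mem_ker, LinearMap.sub_apply, sub_eq_zero]
  rfl

lemma inv_eq (hn : 2 ≤ n) (m : Fin 2 →₀ ℕ) : invBihom F n (m 0) (m 1) =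
    Submodule.span F (Set.range fun i : {i // dg F n i = m} => ee F n i) := by
  classical
  apply le_antisymm
  · intro r hr
    rw [mem_inv] at hr
    obtain ⟨p, hp⟩ := main_range hn r hr.2
    have h1 : r ∈ Submodule.span F (Set.range (ee F n)) := by
      rw [ee_span]; exact ⟨p, hp⟩
    obtain ⟨c, hc⟩ := Finsupp.mem_span_range_iff_exists_finsupp.1 h1
    have h2 := weightedHomogeneousComponent_eq_self hr.1.1
    have h3 := weightedHomogeneousComponent_eq_self hr.1.2
    rw [← h3, ← h2, ← hc, Finsupp.sum, map_sum, map_sum]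
    refine Submodule.sum_mem _ fun i _ => ?_
    rw [map_smul, map_smul]
    refine Submodule.smul_mem _ _ ?_
    rw [weightedHomogeneousComponent_of_mem (BH_ee i).1]
    split_ifs with e0
    · rw [weightedHomogeneousComponent_of_mem (BH_ee i).2]
      split_ifs with e1
      · refine Submodule.subset_span ⟨⟨i, ?_⟩, rfl⟩
        ext k
        fin_cases k
        · exact e0.symm
        · exact e1.symm
      · exact zero_mem _
    · rw [map_zero]; exact zero_mem _
  · rw [Submodule.span_le]
    rintro _ ⟨⟨i, rfl⟩, rfl⟩
    rw [SetLike.mem_coe, mem_inv]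
    exact ⟨BH_ee i, fun σ h => mem_invBihom_gact _ σ h⟩

variable (F n) in
def AA : (Fin n ⊕ Fin n) ⊕ JJ n → ℕ → Prop :=
  Sum.elim (fun _ _ => True) (fun j c => c < NN (Fintype.card F) n j)

lemma card_idx (m : Fin 2 →₀ ℕ) : Nat.card {i // dg F n i = m} =
    Nat.card {a : (Fin n ⊕ Fin n) ⊕ JJ n → ℕ // (∀ j, AA F n j (a j)) ∧ ∑ j, a j • dl F n j = m} := by
  refine Nat.card_eq_of_bijective (fun i => ⟨Sum.elim (fun k => i.1.2 k) (fun j => (i.1.1 j : ℕ)), ?_, ?_⟩)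
    ⟨?_, ?_⟩
  · rintro (j | j)
    · trivial
    · exact (i.1.1 j).2
  · rw [Fintype.sum_sum_type]
    exact i.2
  · rintro ⟨⟨c, a⟩, h⟩ ⟨⟨c', a'⟩, h'⟩ he
    have he := Subtype.ext_iff.1 he
    simp only at he
    have e1 : a = a' := by
      ext k
      exact congrFun he (Sum.inl k)
    have e2 : c = c' := by
      ext k
      exact congrFun he (Sum.inr k)
    subst e1 e2
    rfl
  · rintro ⟨a, h, h'⟩
    refine ⟨⟨⟨fun j => ⟨a (Sum.inr j), h (Sum.inr j)⟩,
      Finsupp.equivFunOnFinite.symm fun k => a (Sum.inl k)⟩, ?_⟩, ?_⟩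
    · rw [Fintype.sum_sum_type] at h'
      exact h'
    · ext (k | k) <;> rfl

lemma hilb_eq (hn : 2 ≤ n) : hilbertSeries F n = ∏ j, ind (dl F n j) (AA F n j) := by
  ext m
  rw [coeff_prod_ind _ dl_ne, ← card_idx]
  change (Module.finrank F (invBihom F n (m 0) (m 1)) : ℤ) = _
  rw [inv_eq hn]
  congr 1
  exact Module.finrank_eq_nat_card_basis (Module.Basis.span
    ((ee_indep hn).comp (fun i : {i // dg F n i = m} => i.1) Subtype.val_injective))

lemma mono_eq (a b : ℕ) : MvPowerSeries.monomial (Finsupp.single 0 a + Finsupp.single 1 b) (1 : ℤ) =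
    (MvPowerSeries.X 0 : MvPowerSeries (Fin 2) ℤ) ^ a * MvPowerSeries.X 1 ^ b := by
  rw [MvPowerSeries.X_pow_eq, MvPowerSeries.X_pow_eq, MvPowerSeries.monomial_mul_monomial, one_mul]

lemma hilb_mul (hn : 2 ≤ n) : hilbertSeries F n *
    ∏ j, (1 - MvPowerSeries.monomial (dl F n j) (1 : ℤ)) =
    ∏ j : JJ n, (1 - MvPowerSeries.monomial (NN (Fintype.card F) n j • dl F n (Sum.inr j)) (1 : ℤ)) := by
  rw [hilb_eq hn, mul_comm, ← Finset.prod_mul_distrib, Fintype.prod_sum_type]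
  rw [Finset.prod_eq_one, one_mul]
  · exact Finset.prod_congr rfl fun j _ => ind_bounded (dl_ne _) _
  · intro j _
    exact ind_unbounded (dl_ne _)

lemma den_eq (hn : 2 ≤ n) : ∏ j, (1 - MvPowerSeries.monomial (dl F n j) (1 : ℤ)) =
    (∏ i ∈ Finset.range n,
        ((1 - (MvPowerSeries.X 0 : MvPowerSeries (Fin 2) ℤ) ^ (Fintype.card F) ^ i) *
         (1 - (MvPowerSeries.X 1 : MvPowerSeries (Fin 2) ℤ) ^ (Fintype.card F) ^ i))) *
      ((∏ i ∈ Finset.range (n - 1),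
        (1 - (MvPowerSeries.X 0 : MvPowerSeries (Fin 2) ℤ) ^ (Fintype.card F) ^ i *
          MvPowerSeries.X 1)) *
      (∏ i ∈ Finset.Icc 1 (n - 2),
        (1 - MvPowerSeries.X 0 *
          (MvPowerSeries.X 1 : MvPowerSeries (Fin 2) ℤ) ^ (Fintype.card F) ^ i))) := by
  rw [Fintype.prod_sum_type, Fintype.prod_sum_type]
  congr 1
  · rw [Finset.prod_mul_distrib, ← Fin.prod_univ_eq_prod_range, ← Fin.prod_univ_eq_prod_range]
    simp [dl, MvPowerSeries.X_pow_eq]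
  · simp only [dl, Sum.elim_inr, mono_eq]
    rw [prod_JJ n hn (fun j : ℤ => 1 - (MvPowerSeries.X 0 : MvPowerSeries (Fin 2) ℤ) ^
      (Fintype.card F) ^ j.toNat * MvPowerSeries.X 1 ^ (Fintype.card F) ^ (-j).toNat)]
    simp

lemma num_eq (hn : 2 ≤ n) :
    ∏ j : JJ n, (1 - MvPowerSeries.monomial (NN (Fintype.card F) n j • dl F n (Sum.inr j)) (1 : ℤ)) =
    (∏ k ∈ Finset.Icc 2 (n - 1),
        (1 - (MvPowerSeries.X 0 : MvPowerSeries (Fin 2) ℤ) ^ (Fintype.card F) ^ (k - 1) *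
          MvPowerSeries.X 1 ^ (Fintype.card F) ^ (n - k))) *
      (∏ k ∈ Finset.Icc 1 (n - 1),
        (1 - (MvPowerSeries.X 0 : MvPowerSeries (Fin 2) ℤ) ^ (Fintype.card F) ^ k *
          MvPowerSeries.X 1 ^ (Fintype.card F) ^ (n - k))) := by
  have h1 : ∀ j : JJ n, (1 - MvPowerSeries.monomial
      (NN (Fintype.card F) n j • dl F n (Sum.inr j)) (1 : ℤ)) =
      (fun j : ℤ => 1 - (MvPowerSeries.X 0 : MvPowerSeries (Fin 2) ℤ) ^
      (Fintype.card F) ^ ((n - j.natAbs) / 2 + j.toNat) * MvPowerSeries.X 1 ^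
        (Fintype.card F) ^ ((n - j.natAbs) / 2 + (-j).toNat)) j := by
    intro j
    simp only [dl, NN, Sum.elim_inr, smul_add, Finsupp.smul_single, smul_eq_mul, ← pow_add, mono_eq]
  rw [Finset.prod_congr rfl fun j _ => h1 j]
  rw [Finset.prod_coe_sort (Finset.Icc (-((n : ℤ) - 2)) ((n : ℤ) - 2))
    (fun j : ℤ => 1 - (MvPowerSeries.X 0 : MvPowerSeries (Fin 2) ℤ) ^
      (Fintype.card F) ^ ((n - j.natAbs) / 2 + j.toNat) * MvPowerSeries.X 1 ^
        (Fintype.card F) ^ ((n - j.natAbs) / 2 + (-j).toNat)),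
    ← Finset.prod_filter_mul_prod_filter_not _ (fun j : ℤ => ((n : ℤ) - j) % 2 = 1)]
  congr 1
  · refine Finset.prod_nbij' (fun j => (((n : ℤ) + 1 + j) / 2).toNat)
      (fun k => 2 * (k : ℤ) - 1 - n) ?_ ?_ ?_ ?_ ?_
    · intro j hj; simp at hj ⊢ <;> omega
    · intro j hj; simp at hj ⊢ <;> omega
    · intro j hj; simp at hj ⊢ <;> omega
    · intro j hj; simp at hj ⊢ <;> omega
    · intro j hj; simp at hj
      congr 4 <;> omega
  · refine Finset.prod_nbij' (fun j => (((n : ℤ) + j) / 2).toNat)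
      (fun k => 2 * (k : ℤ) - n) ?_ ?_ ?_ ?_ ?_
    · intro j hj; simp at hj ⊢ <;> omega
    · intro j hj; simp at hj ⊢ <;> omega
    · intro j hj; simp at hj ⊢ <;> omega
    · intro j hj; simp at hj ⊢ <;> omega
    · intro j hj; simp at hj
      congr 4 <;> omega

end homog

/-- The bigraded Hilbert series of `F_q[V ⊕ V*]^{U_n}` (for `n ≥ 2`), in the form
`H(s,t) · ∏_{i=0}^{n-1} (1-s^{q^i})(1-t^{q^i}) · ∏_{i=0}^{n-2} (1-s^{q^i}t) · ∏_{i=1}^{n-2} (1-st^{q^i})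
 = ∏_{k=2}^{n-1} (1-s^{q^{k-1}}t^{q^{n-k}}) · ∏_{k=1}^{n-1} (1-s^{q^k}t^{q^{n-k}})`. -/
theorem hilbertSeries_Un (hn : 2 ≤ n) :
    hilbertSeries F n *
      (∏ i ∈ Finset.range n,
        ((1 - (MvPowerSeries.X 0 : MvPowerSeries (Fin 2) ℤ) ^ (Fintype.card F) ^ i) *
         (1 - (MvPowerSeries.X 1 : MvPowerSeries (Fin 2) ℤ) ^ (Fintype.card F) ^ i))) *
      (∏ i ∈ Finset.range (n - 1),
        (1 - (MvPowerSeries.X 0 : MvPowerSeries (Fin 2) ℤ) ^ (Fintype.card F) ^ i *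
          MvPowerSeries.X 1)) *
      (∏ i ∈ Finset.Icc 1 (n - 2),
        (1 - MvPowerSeries.X 0 *
          (MvPowerSeries.X 1 : MvPowerSeries (Fin 2) ℤ) ^ (Fintype.card F) ^ i))
    = (∏ k ∈ Finset.Icc 2 (n - 1),
        (1 - (MvPowerSeries.X 0 : MvPowerSeries (Fin 2) ℤ) ^ (Fintype.card F) ^ (k - 1) *
          MvPowerSeries.X 1 ^ (Fintype.card F) ^ (n - k))) *
      (∏ k ∈ Finset.Icc 1 (n - 1),
        (1 - (MvPowerSeries.X 0 : MvPowerSeries (Fin 2) ℤ) ^ (Fintype.card F) ^ k *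
          MvPowerSeries.X 1 ^ (Fintype.card F) ^ (n - k))) := by
  rw [← num_eq hn, ← hilb_mul hn, den_eq hn]
  simp only [mul_assoc]
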